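/- arXiv:1508.01291 — 3 statements merged into one kernel-verified Lean document; each statement's English description precedes it below -/
import Mathlib

section
/- There exist a group G and an infinite set X with a sharply 3-transitive action of G on X such that for every x ∈ X the point stabilizer of x in G has no nontrivial abelian normal subgroup. -/
/-- An action is sharply 3-transitive if any triple of pairwise distinct points is taken
to any other such triple by a unique group element. -/
def SharplyThreeTransitive (G X : Type*) [Group G] [MulAction G X] : Prop :=
  ∀ x y z x' y' z' : X, x ≠ y → x ≠ z → y ≠ z → x' ≠ y' → x' ≠ z' → y' ≠ z' →
    ∃! g : G, g • x = x' ∧ g • y = y' ∧ g • z = z'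

/-- A group `G` acting sharply 3-transitively on an infinite set `X` such that
all point stabilizers have no nontrivial abelian normal subgroup. -/
structure SharplyThreeTransitiveNoAbelianWitness where
  G : Type*
  [grp : Group G]
  X : Type*
  [act : MulAction G X]
  infinite : Infinite X
  sharply3transitive : SharplyThreeTransitive G X
  stabilizer_no_abelian_normal : ∀ x : X,
    ∀ N : Subgroup ↥(MulAction.stabilizer G x), N.Normal →
      (∀ a b : ↥N, a * b = b * a) → N = ⊥

namespace S3T
open Equiv Function

lemma inv_self' {X : Type} (f : Perm X) (x : X) : f⁻¹ (f x) = x := f.symm_apply_apply x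

/-- Graph of the isomorphism between the setwise stabilizers of two triples. -/
def PairE {X : Type} (G : Subgroup (Perm X)) (a b : Fin 3 → X) (c d : Perm X) : Prop :=
  c ∈ G ∧ d ∈ G ∧ ∃ σ : Perm (Fin 3), (∀ i, c (a i) = a (σ i)) ∧ ∀ i, d (b i) = b (σ i)

structure KProp {X : Type} (G : Subgroup (Perm X)) : Prop where
  k1 : ∀ g ∈ G, ∀ x : Fin 3 → X, Injective x → (∀ i, g (x i) = x i) → g = 1
  k2 : ∀ g ∈ G, g * g = 1 → ∀ x y, x ≠ y → g x = x → g y = y → g = 1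
  k3 : ∀ g ∈ G, g * g * g = 1 → ∀ x, g x = x → g = 1

structure Setup {X : Type} (G : Subgroup (Perm X)) (a b : Fin 3 → X) (u : ℕ → ℕ → X)
    (lam : X → ℕ) : Prop where
  k : KProp G
  ha : Injective a
  hb : Injective b
  lamG : ∀ g ∈ G, ∀ x, lam (g x) = lam x
  lamu : ∀ l m, lam (u l m) = l
  reg : ∀ g ∈ G, ∀ l m l' m', g (u l m) = u l' m' → l = l' ∧ m = m' ∧ g = 1
  lama : ∀ i, lam (a i) = 0
  lamb : ∀ i, lam (b i) = 0
  lamreg : ∀ x, lam x ≠ 0 → ∀ g ∈ G, g x = x → g = 1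

/-- A pinch: a subword `t⁻¹ d t` or `t c t⁻¹` that can be shortened. -/
def Pinch {X : Type} (G : Subgroup (Perm X)) (a b : Fin 3 → X)
    (e : Bool) (h : Perm X) (e' : Bool) : Prop :=
  (e = true ∧ e' = false ∧ ∃ c, PairE G a b c h) ∨ (e = false ∧ e' = true ∧ ∃ d, PairE G a b h d)

def Edge {X : Type} (R : X → X → Prop) (e : Bool) (x y : X) : Prop :=
  if e then R x y else R y x

def R0 {X : Type} (a b : Fin 3 → X) (x y : X) : Prop := ∃ i, x = a i ∧ y = b i

structure Cond {X : Type} (G : Subgroup (Perm X)) (a b : Fin 3 → X) (u : ℕ → ℕ → X)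
    (lam : X → ℕ) (R : X → X → Prop) : Prop where
  base : ∀ i, R (a i) (b i)
  func : ∀ x y y', R x y → R x y' → y = y'
  inj : ∀ x x' y, R x y → R x' y → x = x'
  equi : ∀ c d, PairE G a b c d → ∀ x y, R x y → R (c x) (d y)
  lab : ∀ x y, R x y → lam x = lam y
  fresh : ∀ l, ∃ N, ∀ m, N ≤ m → ∀ g ∈ G, ∀ y, ¬ R (g (u l m)) y ∧ ¬ R y (g (u l m))
  path : ∀ (n : ℕ) (e : ℕ → Bool) (g : ℕ → Perm X) (p : ℕ → X), 0 < n →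
    (∀ k, e (k + n) = e k) → (∀ k, g (k + n) = g k) → (∀ k, p (k + n) = p k) →
    (∀ k, g k ∈ G) → (∀ k, Edge R (e k) (g k (p k)) (p (k + 1))) →
    (∀ k, ¬ Pinch G a b (e k) (g (k + 1)) (e (k + 1))) →
    ∀ k, Edge (R0 a b) (e k) (g k (p k)) (p (k + 1))

section
variable {X : Type} {G : Subgroup (Perm X)} {a b : Fin 3 → X} {u : ℕ → ℕ → X} {lam : X → ℕ}
  {R : X → X → Prop}

lemma PairE.swap {c d : Perm X} (h : PairE G a b c d) : PairE G b a d c := by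
  obtain ⟨h1, h2, σ, h3, h4⟩ := h
  exact ⟨h2, h1, σ, h4, h3⟩

lemma PairE.one : PairE G a b 1 1 := ⟨G.one_mem, G.one_mem, 1, by simp, by simp⟩

lemma PairE.mul {c d c' d' : Perm X} (h : PairE G a b c d) (h' : PairE G a b c' d') :
    PairE G a b (c * c') (d * d') := by
  obtain ⟨h1, h2, σ, h3, h4⟩ := h
  obtain ⟨h1', h2', σ', h3', h4'⟩ := h'
  exact ⟨G.mul_mem h1 h1', G.mul_mem h2 h2', σ * σ', by simp [h3, h3'], by simp [h4, h4']⟩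

lemma PairE.inv {c d : Perm X} (h : PairE G a b c d) : PairE G a b c⁻¹ d⁻¹ := by
  obtain ⟨h1, h2, σ, h3, h4⟩ := h
  refine ⟨G.inv_mem h1, G.inv_mem h2, σ⁻¹, fun i => ?_, fun i => ?_⟩
  · rw [Perm.inv_eq_iff_eq, h3]; simp
  · rw [Perm.inv_eq_iff_eq, h4]; simp

lemma Setup.swap (S : Setup G a b u lam) : Setup G b a u lam :=
  ⟨S.k, S.hb, S.ha, S.lamG, S.lamu, S.reg, S.lamb, S.lama, S.lamreg⟩

lemma Pinch.swap {e e' : Bool} {h : Perm X} (H : Pinch G a b (!e) h (!e')) :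
    Pinch G b a e h e' := by
  rcases H with ⟨h1, h2, c, h3⟩ | ⟨h1, h2, c, h3⟩
  · right; exact ⟨by simpa using h1, by simpa using h2, c, h3.swap⟩
  · left; exact ⟨by simpa using h1, by simpa using h2, c, h3.swap⟩

lemma Edge.swap {e : Bool} {x y : X} (H : Edge R e x y) : Edge (fun x y => R y x) (!e) x y := by
  cases e <;> simpa [Edge] using H

lemma Cond.swap (C : Cond G a b u lam R) : Cond G b a u lam (fun x y => R y x) := by
  refine ⟨C.base, fun x y y' h h' => C.inj _ _ _ h h', fun x x' y h h' => C.func _ _ _ h h',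
    fun c d h x y h' => C.equi _ _ h.swap _ _ h', fun x y h => (C.lab _ _ h).symm, ?_, ?_⟩
  · intro l
    obtain ⟨N, hN⟩ := C.fresh l
    exact ⟨N, fun m hm g hg y => ⟨(hN m hm g hg y).2, (hN m hm g hg y).1⟩⟩
  · intro n e g p hn he hg hp hG hE hP k
    have := C.path n (fun k => !(e k)) g p hn (by simp [he]) hg hp hG
      (fun k => by simpa using (hE k).swap) (fun k h => hP k h.swap) k
    have h2 := this.swap
    simp only [Bool.not_not] at h2
    convert h2 using 1
    funext x y
    simp only [R0, eq_iff_iff]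
    constructor <;> rintro ⟨i, h1, h2⟩ <;> exact ⟨i, h2, h1⟩

lemma perm3 : ∀ σ : Perm (Fin 3), σ = 1 ∨ σ * σ * σ = 1 ∨ (σ * σ = 1 ∧ ∃ i, σ i = i) := by
  decide

lemma KProp.free (K : KProp G) (ha : Injective a) {c : Perm X} (hc : c ∈ G) {σ : Perm (Fin 3)}
    (h : ∀ i, c (a i) = a (σ i)) {x : X} (hx : ∀ i, x ≠ a i) (hcx : c x = x) : c = 1 := by
  rcases perm3 σ with h1 | h1 | ⟨h1, i, hi⟩
  · exact K.k1 c hc a ha (by simp [h, h1])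
  · refine K.k3 c hc (K.k1 _ (G.mul_mem (G.mul_mem hc hc) hc) a ha fun i => ?_) x hcx
    have := congrArg (fun τ : Perm (Fin 3) => τ i) h1
    simp only [Perm.mul_apply, Perm.one_apply] at this
    simp [h, this]
  · refine K.k2 c hc (K.k1 _ (G.mul_mem hc hc) a ha fun i => ?_) x (a i) (hx i) hcx (by rw [h, hi])
    have := congrArg (fun τ : Perm (Fin 3) => τ i) h1
    simp only [Perm.mul_apply, Perm.one_apply] at this
    simp [h, this]

/-- the isomorphism graph is functional -/
lemma PairE.right_one (K : KProp G) (ha : Injective a) (hb : Injective b) {d : Perm X}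
    (h : PairE G a b 1 d) : d = 1 := by
  obtain ⟨h1, h2, σ, h3, h4⟩ := h
  refine K.k1 d h2 b hb fun i => ?_
  have := ha (h3 i)
  rw [h4, ← this]

lemma Setup.avoid (S : Setup G a b u lam) (x : X) :
    ∃ N, ∀ l m, N ≤ m → ∀ g ∈ G, g (u l m) ≠ x := by
  by_cases h : ∃ l m, ∃ g ∈ G, g (u l m) = x
  · obtain ⟨l, m, g, hg, hx⟩ := h
    refine ⟨m + 1, fun l' m' hm g' hg' hx' => ?_⟩
    have := S.reg (g⁻¹ * g') (G.mul_mem (G.inv_mem hg) hg') l' m' l m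
      (by rw [Perm.mul_apply, hx', Perm.inv_eq_iff_eq, hx])
    omega
  · push Not at h
    exact ⟨0, fun l m _ g hg => h l m g hg⟩

lemma cond0 (S : Setup G a b u lam) : Cond G a b u lam (R0 a b) := by
  refine ⟨fun i => ⟨i, rfl, rfl⟩, ?_, ?_, ?_, ?_, ?_, ?_⟩
  · rintro x y y' ⟨i, rfl, rfl⟩ ⟨j, h, rfl⟩
    rw [S.ha h]
  · rintro x y y' ⟨i, rfl, rfl⟩ ⟨j, rfl, h⟩
    rw [S.hb h]
  · rintro c d ⟨h1, h2, σ, h3, h4⟩ x y ⟨i, rfl, rfl⟩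
    exact ⟨σ i, h3 i, h4 i⟩
  · rintro x y ⟨i, rfl, rfl⟩
    rw [S.lama, S.lamb]
  · intro l
    choose N hN using fun i => S.avoid (a i)
    choose M hM using fun i => S.avoid (b i)
    refine ⟨∑ i, N i + ∑ i, M i, fun m hm g hg y => ⟨?_, ?_⟩⟩
    · rintro ⟨i, h, -⟩
      refine hN i l m ?_ g hg h
      have : N i ≤ ∑ i, N i := Finset.single_le_sum (fun _ _ => Nat.zero_le _) (Finset.mem_univ i)
      omega
    · rintro ⟨i, -, h⟩
      refine hM i l m ?_ g hg h
      have : M i ≤ ∑ i, M i := Finset.single_le_sum (fun _ _ => Nat.zero_le _) (Finset.mem_univ i)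
      omega
  · intro n e g p hn he hg hp hG hE hP k
    exact hE k

def ext1 (G : Subgroup (Perm X)) (a b : Fin 3 → X) (R : X → X → Prop) (x y : X) (x' y' : X) : Prop :=
  R x' y' ∨ ∃ c d, PairE G a b c d ∧ x' = c x ∧ y' = d y

lemma extend (S : Setup G a b u lam) (C : Cond G a b u lam R) (x : X) :
    ∃ R', Cond G a b u lam R' ∧ (∀ z w, R z w → R' z w) ∧ ∃ y, R' x y := by
  by_cases hx : ∃ y, R x y
  · exact ⟨R, C, fun _ _ h => h, hx⟩
  push Not at hx
  obtain ⟨N1, hN1⟩ := C.fresh (lam x)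
  obtain ⟨N2, hN2⟩ := S.avoid x
  obtain ⟨y, hy, hyR, hyx, hyreg⟩ : ∃ y, lam y = lam x ∧
      (∀ g ∈ G, ∀ z, ¬ R (g y) z ∧ ¬ R z (g y)) ∧ (∀ g ∈ G, g y ≠ x) ∧
      (∀ g ∈ G, g y = y → g = 1) := by
    refine ⟨u (lam x) (N1 + N2), S.lamu _ _, hN1 _ (by omega), hN2 _ _ (by omega), ?_⟩
    intro g hg h
    exact (S.reg g hg _ _ _ _ h).2.2
  have hxa : ∀ i, x ≠ a i := fun i h => hx (b i) (h ▸ C.base i)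
  have hxR : ∀ c d, PairE G a b c d → ∀ z, ¬ R (c x) z := by
    intro c d h z hz
    have := C.equi _ _ h.inv _ _ hz
    rw [inv_self'] at this
    exact hx _ this
  refine ⟨ext1 G a b R x y, ?_, fun z w h => Or.inl h, y, Or.inr ⟨1, 1, PairE.one, rfl, rfl⟩⟩
  refine ⟨fun i => Or.inl (C.base i), ?_, ?_, ?_, ?_, ?_, ?_⟩
  · rintro z w w' (h | ⟨c, d, h, rfl, rfl⟩) (h' | ⟨c', d', h', h2, rfl⟩)
    · exact C.func _ _ _ h h'
    · subst h2
      exact (hxR _ _ h' _ h).elim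
    · exact (hxR _ _ h _ h').elim
    · have h3 := h.inv.mul h'
      have h4 : (c⁻¹ * c') = 1 := by
        obtain ⟨m1, m2, σ, m3, m4⟩ := h3
        refine S.k.free S.ha m1 m3 hxa ?_
        rw [Perm.mul_apply, ← h2, inv_self']
      rw [h4] at h3
      have h5 := h3.right_one S.k S.ha S.hb
      rw [inv_mul_eq_one] at h5
      rw [h5]
  · rintro z z' w (h | ⟨c, d, h, rfl, rfl⟩) (h' | ⟨c', d', h', rfl, h2⟩)
    · exact C.inj _ _ _ h h'
    · subst h2
      exact ((hyR _ h'.2.1 _).2 h).elim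
    · exact ((hyR _ h.2.1 _).2 h').elim
    · have h3 := h.inv.mul h'
      have h4 : (d⁻¹ * d') = 1 := by
        refine hyreg _ h3.2.1 ?_
        rw [Perm.mul_apply, ← h2, inv_self']
      rw [h4] at h3
      have h5 := h3.swap.right_one S.k S.hb S.ha
      rw [inv_mul_eq_one] at h5
      rw [h5]
  · rintro c d h z w (h' | ⟨c', d', h', rfl, rfl⟩)
    · exact Or.inl (C.equi _ _ h _ _ h')
    · exact Or.inr ⟨_, _, h.mul h', rfl, rfl⟩
  · rintro z w (h' | ⟨c', d', h', rfl, rfl⟩)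
    · exact C.lab _ _ h'
    · rw [S.lamG _ h'.1, S.lamG _ h'.2.1, hy]
  · intro l
    obtain ⟨N3, hN3⟩ := C.fresh l
    obtain ⟨N4, hN4⟩ := S.avoid y
    refine ⟨N2 + N3 + N4, fun m hm g hg z => ⟨?_, ?_⟩⟩
    · rintro (h | ⟨c, d, h, h2, -⟩)
      · exact (hN3 m (by omega) g hg z).1 h
      · refine hN2 l m (by omega) (c⁻¹ * g) (G.mul_mem (G.inv_mem h.1) hg) ?_
        rw [Perm.mul_apply, h2, inv_self']
    · rintro (h | ⟨c, d, h, -, h2⟩)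
      · exact (hN3 m (by omega) g hg z).2 h
      · refine hN4 l m (by omega) (d⁻¹ * g) (G.mul_mem (G.inv_mem h.2.1) hg) ?_
        rw [Perm.mul_apply, h2, inv_self']
  · intro n e g p hn he hg hp hG hE hP
    -- no new edge is used in the positive direction
    have hpos : ∀ k, ¬ (e k = true ∧ ∃ c d, PairE G a b c d ∧ p (k + 1) = d y) := by
      rintro k ⟨hek, c, d, hcd, hpk⟩
      have h1 := hE (k + 1)
      rw [hpk] at h1
      cases he' : e (k + 1) with
      | true =>
        rw [he'] at h1
        simp only [Edge, if_true] at h1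
        rcases h1 with h1 | ⟨c', d', h', h2, -⟩
        · exact (hyR (g (k + 1) * d) (G.mul_mem (hG _) hcd.2.1) _).1 h1
        · refine hyx (c'⁻¹ * (g (k + 1) * d)) (G.mul_mem (G.inv_mem h'.1)
            (G.mul_mem (hG _) hcd.2.1)) ?_
          rw [Perm.mul_apply, Perm.mul_apply, h2, inv_self']
      | false =>
        rw [he'] at h1
        simp only [Edge, Bool.false_eq_true, if_false] at h1
        rcases h1 with h1 | ⟨c', d', h', -, h2⟩
        · exact (hyR (g (k + 1) * d) (G.mul_mem (hG _) hcd.2.1) _).2 h1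
        · refine hP k (Or.inl ⟨hek, he', c' * c⁻¹, ?_⟩)
          have h3 : d'⁻¹ * (g (k + 1) * d) = 1 := by
            refine hyreg _ (G.mul_mem (G.inv_mem h'.2.1) (G.mul_mem (hG _) hcd.2.1)) ?_
            rw [Perm.mul_apply, Perm.mul_apply, h2, inv_self']
          have h4 : g (k + 1) = d' * d⁻¹ := by
            rw [inv_mul_eq_one] at h3
            rw [h3]; group
          rw [h4]
          exact h'.mul hcd.inv
    have hneg : ∀ k, ¬ (e (k + 1) = false ∧ ∃ c d, PairE G a b c d ∧
        g (k + 1) (p (k + 1)) = d y) := by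
      rintro k ⟨hek, c, d, hcd, hpk⟩
      have hpk' : p (k + 1) = (((g (k + 1))⁻¹ * d) y) := by
        rw [Perm.mul_apply, ← hpk, inv_self']
      have hm : (g (k + 1))⁻¹ * d ∈ G := G.mul_mem (G.inv_mem (hG _)) hcd.2.1
      have h1 := hE k
      rw [hpk'] at h1
      cases he' : e k with
      | true =>
        rw [he'] at h1
        simp only [Edge, if_true] at h1
        rcases h1 with h1 | ⟨c', d', h', -, h2⟩
        · exact (hyR _ hm _).2 h1
        · exact hpos k ⟨he', c', d', h', by rw [hpk', h2]⟩
      | false =>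
        rw [he'] at h1
        simp only [Edge, Bool.false_eq_true, if_false] at h1
        rcases h1 with h1 | ⟨c', d', h', h2, -⟩
        · exact (hyR _ hm _).1 h1
        · refine hyx (c'⁻¹ * ((g (k + 1))⁻¹ * d)) (G.mul_mem (G.inv_mem h'.1) hm) ?_
          rw [Perm.mul_apply, h2, inv_self']
    refine C.path n e g p hn he hg hp hG (fun k => ?_) hP
    have h1 := hE k
    cases he' : e k with
    | true =>
      rw [he'] at h1
      simp only [Edge, if_true] at h1 ⊢
      rcases h1 with h1 | ⟨c', d', h', -, h2⟩
      · exact h1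
      · exact (hpos k ⟨he', c', d', h', h2⟩).elim
    | false =>
      rw [he'] at h1
      simp only [Edge, Bool.false_eq_true, if_false] at h1 ⊢
      rcases h1 with h1 | ⟨c', d', h', -, h2⟩
      · exact h1
      · refine (hneg (k + n - 1) ?_).elim
        have h3 : k + n - 1 + 1 = k + n := by omega
        rw [h3, he, hg, hp]
        exact ⟨he', c', d', h', h2⟩

lemma extend2 (S : Setup G a b u lam) (C : Cond G a b u lam R) (x : X) :
    ∃ R', Cond G a b u lam R' ∧ (∀ z w, R z w → R' z w) ∧ (∃ y, R' x y) ∧ ∃ y, R' y x := by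
  obtain ⟨R1, C1, h1, y, hy⟩ := extend S C x
  obtain ⟨R2, C2, h2, z, hz⟩ := extend S.swap C1.swap x
  exact ⟨_, C2.swap, fun z w h => h2 _ _ (h1 _ _ h), ⟨y, h2 _ _ hy⟩, z, hz⟩

/-- The properties of the limit permutation. -/
structure TProp (G : Subgroup (Perm X)) (a b : Fin 3 → X) (lam : X → ℕ) (t : Perm X) : Prop where
  base : ∀ i, t (a i) = b i
  equi : ∀ c d, PairE G a b c d → t * c = d * t
  lab : ∀ x, lam (t x) = lam x
  path : ∀ (n : ℕ) (e : ℕ → Bool) (g : ℕ → Perm X) (p : ℕ → X), 0 < n →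
    (∀ k, e (k + n) = e k) → (∀ k, g (k + n) = g k) → (∀ k, p (k + n) = p k) →
    (∀ k, g k ∈ G) → (∀ k, p (k + 1) = (if e k then t else t⁻¹) (g k (p k))) →
    (∀ k, ¬ Pinch G a b (e k) (g (k + 1)) (e (k + 1))) →
    ∀ k, Edge (R0 a b) (e k) (g k (p k)) (p (k + 1))

lemma Edge.mono {R R' : X → X → Prop} (h : ∀ x y, R x y → R' x y) {e : Bool} {x y : X}
    (H : Edge R e x y) : Edge R' e x y := by
  cases e <;> exact h _ _ H

lemma exists_t [Countable X] (S : Setup G a b u lam) : ∃ t, TProp G a b lam t := by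
  have : Nonempty X := ⟨a 0⟩
  obtain ⟨x, hx⟩ := exists_surjective_nat X
  choose f hf1 hf2 hf3 hf4 using fun (R : {R // Cond G a b u lam R}) (n : ℕ) =>
    extend2 S R.2 (x n)
  let Rn : ℕ → {R // Cond G a b u lam R} := fun n =>
    Nat.rec ⟨R0 a b, cond0 S⟩ (fun n R => ⟨f R n, hf1 R n⟩) n
  have hsucc : ∀ n, (Rn (n + 1)).1 = f (Rn n) n := fun n => rfl
  have hmono : ∀ m n, m ≤ n → ∀ z w, (Rn m).1 z w → (Rn n).1 z w := by
    intro m n hmn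
    induction n, hmn using Nat.le_induction with
    | base => exact fun _ _ h => h
    | succ n _ ih => exact fun z w h => by rw [hsucc]; exact hf2 _ _ _ _ (ih z w h)
  have hT1 : ∀ z, ∃ w, ∃ n, (Rn n).1 z w := by
    intro z
    obtain ⟨n, rfl⟩ := hx z
    obtain ⟨w, hw⟩ := hf3 (Rn n) n
    exact ⟨w, n + 1, hw⟩
  have hT2 : ∀ z, ∃ w, ∃ n, (Rn n).1 w z := by
    intro z
    obtain ⟨n, rfl⟩ := hx z
    obtain ⟨w, hw⟩ := hf4 (Rn n) n
    exact ⟨w, n + 1, hw⟩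
  have hfun : ∀ z w w' m n, (Rn m).1 z w → (Rn n).1 z w' → w = w' := fun z w w' m n h h' =>
    (Rn (max m n)).2.func _ _ _ (hmono _ _ (le_max_left _ _) _ _ h)
      (hmono _ _ (le_max_right _ _) _ _ h')
  have hinj : ∀ z z' w m n, (Rn m).1 z w → (Rn n).1 z' w → z = z' := fun z w w' m n h h' =>
    (Rn (max m n)).2.inj _ _ _ (hmono _ _ (le_max_left _ _) _ _ h)
      (hmono _ _ (le_max_right _ _) _ _ h')
  choose F nF hF using hT1
  choose I nI hI using hT2
  let t : Perm X := ⟨F, I, fun z => hinj _ _ _ _ _ (hI (F z)) (hF z),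
    fun z => hfun _ _ _ _ _ (hF (I z)) (hI z)⟩
  have ht : ∀ z, (Rn (nF z)).1 z (t z) := hF
  have ht' : ∀ z, (Rn (nI z)).1 (t⁻¹ z) z := hI
  have hu : ∀ n z w, (Rn n).1 z w → t z = w := fun n z w h => hfun _ _ _ _ _ (ht z) h
  refine ⟨t, fun i => hu 0 _ _ ((Rn 0).2.base i), ?_, ?_, ?_⟩
  · intro c d h
    ext z
    exact hu _ _ _ ((Rn (nF z)).2.equi c d h _ _ (ht z))
  · exact fun z => ((Rn (nF z)).2.lab _ _ (ht z)).symm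
  · intro n e g p hn he hg hp hG hE hP
    have hex : ∀ k, ∃ m, Edge (Rn m).1 (e k) (g k (p k)) (p (k + 1)) := by
      intro k
      rw [hE k]
      cases e k with
      | true => exact ⟨_, ht _⟩
      | false => exact ⟨_, ht' _⟩
    choose m hm using hex
    let M := ∑ k ∈ Finset.range n, m k
    refine (Rn M).2.path n e g p hn he hg hp hG (fun k => ?_) hP
    have hk : ∀ k < n, Edge (Rn M).1 (e k) (g k (p k)) (p (k + 1)) := by
      intro k hk
      refine Edge.mono (hmono (m k) M ?_) (hm k)
      exact Finset.single_le_sum (f := m) (fun _ _ => Nat.zero_le _) (Finset.mem_range.2 hk)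
    induction k using Nat.strong_induction_on with
    | _ k ih =>
      by_cases hkn : k < n
      · exact hk k hkn
      · obtain ⟨j, rfl⟩ : ∃ j, k = j + n := ⟨k - n, by omega⟩
        have := ih j (by omega)
        rw [he, hg, hp, show j + n + 1 = j + 1 + n by ring, hp]
        exact this
end
end S3T

namespace S3T
open Equiv Function
section
variable {X : Type} {G : Subgroup (Perm X)} {a b : Fin 3 → X} {u : ℕ → ℕ → X} {lam : X → ℕ}
  {t : Perm X}

def letter (t : Perm X) (l : Bool × Perm X) : Perm X := (if l.1 then t else t⁻¹) * l.2

def ev (t : Perm X) : List (Bool × Perm X) → Perm X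
  | [] => 1
  | l :: L => ev t L * letter t l

lemma ev_append (L M : List (Bool × Perm X)) : ev t (L ++ M) = ev t M * ev t L := by
  induction L with
  | nil => simp [ev]
  | cons l L ih => simp [ev, ih, mul_assoc]

def W (t : Perm X) (l : ℕ → Bool × Perm X) : ℕ → Perm X
  | 0 => 1
  | k + 1 => letter t (l k) * W t l k

lemma W_shift (l : ℕ → Bool × Perm X) (k : ℕ) :
    W t l (k + 1) = W t (fun i => l (i + 1)) k * letter t (l 0) := by
  induction k with
  | zero => simp [W]
  | succ k ih => rw [W, ih, W, mul_assoc]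

lemma ev_eq_W (L : List (Bool × Perm X)) (l : ℕ → Bool × Perm X)
    (h : ∀ k (hk : k < L.length), l k = L[k]) : ev t L = W t l L.length := by
  induction L generalizing l with
  | nil => rfl
  | cons m L ih =>
    rw [List.length_cons, W_shift, ev, ih (fun i => l (i + 1)), h 0 (by simp)]
    · rfl
    · intro k hk
      rw [h (k + 1) (by simpa using hk)]; rfl

lemma W_add (l : ℕ → Bool × Perm X) (n : ℕ) (hl : ∀ k, l (k + n) = l k) (k : ℕ) :
    W t l (k + n) = W t l k * W t l n := by
  induction k with
  | zero => simp [W]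
  | succ k ih =>
    rw [show k + 1 + n = (k + n) + 1 by ring, W, ih, hl, W, mul_assoc]

lemma W_mul (l : ℕ → Bool × Perm X) (n : ℕ) (hl : ∀ k, l (k + n) = l k) (m : ℕ) :
    W t l (m * n) = W t l n ^ m := by
  induction m with
  | zero => simp [W]
  | succ m ih => rw [Nat.succ_mul, W_add l n hl, ih, pow_succ]

/-- the periodic sequence of letters of a word -/
def seq (L : List (Bool × Perm X)) (k : ℕ) : Bool × Perm X := L.getD (k % L.length) (true, 1)

lemma seq_add (L : List (Bool × Perm X)) (k m : ℕ) : seq L (k + m * L.length) = seq L k := by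
  simp [seq]

lemma seq_mem (L : List (Bool × Perm X)) (hL : L ≠ []) (k : ℕ) : seq L k ∈ L := by
  have : k % L.length < L.length := Nat.mod_lt _ (List.length_pos_iff.2 hL)
  rw [seq, List.getD_eq_getElem _ _ this]
  exact List.getElem_mem _

lemma ev_eq_seq (L : List (Bool × Perm X)) : ev t L = W t (seq L) L.length := by
  refine ev_eq_W L _ fun k hk => ?_
  rw [seq, Nat.mod_eq_of_lt hk, List.getD_eq_getElem _ _ hk]

/-- cyclically reduced words -/
structure CR (G : Subgroup (Perm X)) (a b : Fin 3 → X) (L : List (Bool × Perm X)) : Prop where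
  ne : L ≠ []
  mem : ∀ l ∈ L, l.2 ∈ G
  red : ∀ k, ¬ Pinch G a b (seq L k).1 (seq L (k + 1)).2 (seq L (k + 1)).1

lemma CR.path {L : List (Bool × Perm X)} (H : CR G a b L) (T : TProp G a b lam t) (m : ℕ)
    (hm : 0 < m) (x : X) (hx : (ev t L ^ m) x = x) (k : ℕ) :
    Edge (R0 a b) (seq L k).1 ((seq L k).2 (W t (seq L) k x)) (W t (seq L) (k + 1) x) := by
  have hpos := List.length_pos_iff.2 H.ne
  refine T.path (m * L.length) (fun k => (seq L k).1) (fun k => (seq L k).2)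
    (fun k => W t (seq L) k x) (Nat.mul_pos hm hpos) ?_ ?_ ?_ ?_ ?_ H.red k
  · intro k; simp only [seq_add]
  · intro k; simp only [seq_add]
  · intro k
    show W t (seq L) (k + m * L.length) x = W t (seq L) k x
    rw [W_add _ _ (fun k => seq_add L k m), W_mul _ _ (fun k => by simpa using seq_add L k 1),
      ← ev_eq_seq, Perm.mul_apply, hx]
  · intro k; exact H.mem _ (seq_mem L H.ne k)
  · intro k; rfl

lemma R0_triple {P Q : Fin 3 → X} (hP : Injective P) (h : ∀ j, R0 a b (P j) (Q j)) :
    ∃ σ : Perm (Fin 3), (∀ j, P j = a (σ j)) ∧ ∀ j, Q j = b (σ j) := by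
  choose s h1 h2 using h
  have hs : Injective s := fun i j hij => hP (by rw [h1, h1, hij])
  exact ⟨Equiv.ofBijective s (Finite.injective_iff_bijective.1 hs), h1, h2⟩

lemma CR.absurd3 {L : List (Bool × Perm X)} (H : CR G a b L) (T : TProp G a b lam t)
    (full : ∀ σ : Perm (Fin 3), ∃ g ∈ G, ∀ i, g (b i) = b (σ i))
    (hno : ∀ g ∈ G, ¬ ∀ i, g (a i) = b i) (m : ℕ)
    (hm : 0 < m) (x : Fin 3 → X) (hinj : Injective x) (hx : ∀ j, (ev t L ^ m) (x j) = x j) :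
    False := by
  have hE := fun k j => H.path T m hm (x j) (hx j) k
  have hG : ∀ k, (seq L k).2 ∈ G := fun k => H.mem _ (seq_mem L H.ne k)
  have hPi : ∀ k, Injective (fun j => W t (seq L) k (x j)) :=
    fun k => (W t (seq L) k).injective.comp hinj
  have hPi' : ∀ k, Injective (fun j => (seq L k).2 (W t (seq L) k (x j))) :=
    fun k => (seq L k).2.injective.comp (hPi k)
  -- information at each step
  have htrue : ∀ k, (seq L k).1 = true → ∃ σ : Perm (Fin 3),
      (∀ j, (seq L k).2 (W t (seq L) k (x j)) = a (σ j)) ∧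
      ∀ j, W t (seq L) (k + 1) (x j) = b (σ j) := by
    intro k hk
    refine R0_triple (hPi' k) fun j => ?_
    have := hE k j
    rw [hk] at this
    exact this
  have hfalse : ∀ k, (seq L k).1 = false → ∃ σ : Perm (Fin 3),
      (∀ j, W t (seq L) (k + 1) (x j) = a (σ j)) ∧
      ∀ j, (seq L k).2 (W t (seq L) k (x j)) = b (σ j) := by
    intro k hk
    refine R0_triple (hPi (k + 1)) fun j => ?_
    have := hE k j
    rw [hk] at this
    exact this
  have hab : ∀ g ∈ G, ∀ σ : Perm (Fin 3), ¬ ∀ i, g (a i) = b (σ i) := by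
    intro g hg σ h
    obtain ⟨d, hd, h2⟩ := full σ⁻¹
    exact hno (d * g) (G.mul_mem hd hg) fun i => by simp [h, h2]
  have key : ∀ k, (seq L k).1 = true := by
    intro k
    by_contra hk
    simp only [Bool.not_eq_true] at hk
    obtain ⟨σ, h1, -⟩ := hfalse k hk
    cases hk' : (seq L (k + 1)).1 with
    | true =>
      obtain ⟨τ, h2, -⟩ := htrue _ hk'
      obtain ⟨d, hd, h3⟩ := full (τ * σ⁻¹)
      refine H.red k (Or.inr ⟨hk, hk', d, hG _, hd, τ * σ⁻¹, fun i => ?_, h3⟩)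
      have := h2 (σ⁻¹ i)
      rw [h1] at this
      simpa using this
    | false =>
      obtain ⟨τ, -, h2⟩ := hfalse _ hk'
      refine hab _ (hG (k + 1)) (τ * σ⁻¹) fun i => ?_
      have := h2 (σ⁻¹ i)
      rw [h1] at this
      simpa using this
  obtain ⟨σ, -, h1⟩ := htrue 0 (key 0)
  obtain ⟨τ, h2, -⟩ := htrue 1 (key 1)
  refine hab _ (G.inv_mem (hG 1)) (σ * τ⁻¹) fun i => ?_
  have := h2 (τ⁻¹ i)
  rw [h1] at this
  rw [Perm.inv_eq_iff_eq]
  simpa using this.symm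

def G1 (G : Subgroup (Perm X)) (t : Perm X) : Subgroup (Perm X) :=
  Subgroup.closure ((G : Set (Perm X)) ∪ {t})

lemma le_G1 : G ≤ G1 G t := fun _ hg => Subgroup.subset_closure (Or.inl hg)

lemma t_mem : t ∈ G1 G t := Subgroup.subset_closure (Or.inr rfl)

lemma letter_mem {l : Bool × Perm X} (h : l.2 ∈ G) : letter t l ∈ G1 G t := by
  refine Subgroup.mul_mem _ ?_ (le_G1 h)
  split_ifs
  · exact t_mem
  · exact Subgroup.inv_mem _ t_mem

lemma ev_mem {L : List (Bool × Perm X)} (h : ∀ l ∈ L, l.2 ∈ G) : ev t L ∈ G1 G t := by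
  induction L with
  | nil => exact Subgroup.one_mem _
  | cons l L ih =>
    exact Subgroup.mul_mem _ (ih fun m hm => h m (List.mem_cons_of_mem _ hm))
      (letter_mem (h l List.mem_cons_self))

lemma pinch_eval (T : TProp G a b lam t) {l l' : Bool × Perm X} (hl : l.2 ∈ G)
    (hP : Pinch G a b l.1 l'.2 l'.1) : letter t l' * letter t l ∈ G := by
  obtain ⟨e, g⟩ := l
  obtain ⟨e', g'⟩ := l'
  rcases hP with ⟨h1, h2, c, h3⟩ | ⟨h1, h2, d, h3⟩
  · simp only at h1 h2 h3 hl
    subst h1 h2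
    have : letter t (false, g') * letter t (true, g) = c * g := by
      simp only [letter, Bool.false_eq_true, if_false, if_true]
      have := T.equi _ _ h3
      rw [show t⁻¹ * g' * (t * g) = t⁻¹ * (g' * t) * g by group, ← this]; group
    rw [this]
    exact G.mul_mem h3.1 hl
  · simp only at h1 h2 h3 hl
    subst h1 h2
    have : letter t (true, g') * letter t (false, g) = d * g := by
      simp only [letter, Bool.false_eq_true, if_false, if_true]
      have := T.equi _ _ h3
      rw [this]; group
    rw [this]
    exact G.mul_mem h3.2.1 hl

/-- The dichotomy for conjugacy classes. -/
def Dich (G : Subgroup (Perm X)) (a b : Fin 3 → X) (t w : Perm X) : Prop :=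
  ∃ v ∈ G1 G t, v * w * v⁻¹ ∈ G ∨ ∃ L, CR G a b L ∧ v * w * v⁻¹ = ev t L

lemma Dich.conj {w v : Perm X} (hv : v ∈ G1 G t) (h : Dich G a b t (v * w * v⁻¹)) :
    Dich G a b t w := by
  obtain ⟨v', hv', h⟩ := h
  refine ⟨v' * v, Subgroup.mul_mem _ hv' hv, ?_⟩
  have e : v' * v * w * (v' * v)⁻¹ = v' * (v * w * v⁻¹) * v'⁻¹ := by group
  rwa [e]

lemma dich_ev (T : TProp G a b lam t) (n : ℕ) : ∀ L : List (Bool × Perm X), L.length = n →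
    (∀ l ∈ L, l.2 ∈ G) → Dich G a b t (ev t L) := by
  induction n using Nat.strong_induction_on with
  | _ n ih =>
    intro L hn hL
    by_cases hne : L = []
    · subst hne
      exact ⟨1, Subgroup.one_mem _, Or.inl (by simp [ev])⟩
    by_cases hred : ∀ k, ¬ Pinch G a b (seq L k).1 (seq L (k + 1)).2 (seq L (k + 1)).1
    · exact ⟨1, Subgroup.one_mem _, Or.inr ⟨L, ⟨hne, hL, hred⟩, by simp⟩⟩
    push Not at hred
    obtain ⟨k, hk⟩ := hred
    have hpos := List.length_pos_iff.2 hne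
    have hconj : ev t (L.rotate k) = ev t (L.take (k % L.length)) * ev t L *
        (ev t (L.take (k % L.length)))⁻¹ := by
      have h1 := List.rotate_eq_drop_append_take_mod (l := L) (n := k)
      rw [h1, ev_append]
      conv_rhs => rw [← List.take_append_drop (k % L.length) L]
      rw [ev_append, List.take_append_drop]
      group
    have hrmem : ∀ l ∈ L.rotate k, l.2 ∈ G := fun l hl => hL l (List.mem_rotate.1 hl)
    refine Dich.conj (v := ev t (L.take (k % L.length)))
      (ev_mem fun l hl => hL l (List.mem_of_mem_take hl)) ?_
    rw [← hconj]
    have hseq : ∀ i (hi : i < (L.rotate k).length), (L.rotate k)[i] = seq L (k + i) := by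
      intro i hi
      rw [List.getElem_rotate, seq, List.getD_eq_getElem _ _ (Nat.mod_lt _ hpos)]
      simp only [add_comm]
    have hlen : (L.rotate k).length = n := by simp [hn]
    have hn1 : n ≠ 1 := by
      rintro rfl
      have : seq L (k + 1) = seq L k := by simp [seq, hn, Nat.mod_one]
      rw [this] at hk
      rcases hk with ⟨h1, h2, -⟩ | ⟨h1, h2, -⟩ <;> simp [h1] at h2
    generalize L.rotate k = M at *
    match M, hlen, hrmem, hseq with
    | [], hlen, _, _ => simp at hlen; omega
    | [_], hlen, _, _ => simp at hlen; omega
    | [l0, l1], hlen, hrmem, hseq =>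
      have h0 := hseq 0 (by simp)
      have h1 := hseq 1 (by simp)
      simp at h0 h1
      rw [← h0, ← h1] at hk
      have := pinch_eval T (hrmem l0 (by simp)) hk
      exact ⟨1, Subgroup.one_mem _, Or.inl (by simpa [ev] using this)⟩
    | l0 :: l1 :: l2 :: M, hlen, hrmem, hseq =>
      have h0 := hseq 0 (by simp)
      have h1 := hseq 1 (by simp)
      simp at h0 h1
      rw [← h0, ← h1] at hk
      have := pinch_eval T (hrmem l0 (by simp)) hk
      have he : ev t (l0 :: l1 :: l2 :: M) =
          ev t ((l2.1, l2.2 * (letter t l1 * letter t l0)) :: M) := by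
        simp only [ev, letter]; group
      rw [he]
      refine ih (n - 2) (by simp at hlen; omega) _ (by simp at hlen ⊢; omega) ?_
      intro l hl
      rcases List.mem_cons.1 hl with rfl | hl
      · exact G.mul_mem (hrmem l2 (by simp)) this
      · exact hrmem l (by simp [hl])

lemma dich (T : TProp G a b lam t) {w : Perm X} (hw : w ∈ G1 G t) : Dich G a b t w := by
  have key : ∃ g ∈ G, ∃ L : List (Bool × Perm X), (∀ l ∈ L, l.2 ∈ G) ∧ w = g * ev t L := by
    refine Subgroup.closure_induction_left
      (p := fun w _ => ∃ g ∈ G, ∃ L : List (Bool × Perm X), (∀ l ∈ L, l.2 ∈ G) ∧ w = g * ev t L)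
      ?_ ?_ ?_ hw
    · exact ⟨1, G.one_mem, [], by simp, by simp [ev]⟩
    · rintro x (hx | hx) y - ⟨g, hg, L, hL, rfl⟩
      · exact ⟨x * g, G.mul_mem hx hg, L, hL, by group⟩
      · rw [Set.mem_singleton_iff] at hx; subst hx
        refine ⟨1, G.one_mem, L ++ [(true, g)], ?_, ?_⟩
        · intro l hl
          rcases List.mem_append.1 hl with h | h
          · exact hL l h
          · rw [List.mem_singleton.1 h]; exact hg
        · simp [ev_append, ev, letter, mul_assoc]
    · rintro x (hx | hx) y - ⟨g, hg, L, hL, rfl⟩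
      · exact ⟨x⁻¹ * g, G.mul_mem (G.inv_mem hx) hg, L, hL, by group⟩
      · rw [Set.mem_singleton_iff] at hx; subst hx
        refine ⟨1, G.one_mem, L ++ [(false, g)], ?_, ?_⟩
        · intro l hl
          rcases List.mem_append.1 hl with h | h
          · exact hL l h
          · rw [List.mem_singleton.1 h]; exact hg
        · simp [ev_append, ev, letter, mul_assoc]
  obtain ⟨g, hg, L, hL, rfl⟩ := key
  refine Dich.conj (v := g⁻¹) (le_G1 (G.inv_mem hg)) ?_
  rw [show g⁻¹ * (g * ev t L) * g⁻¹⁻¹ = ev t L * g by group]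
  cases L with
  | nil => exact ⟨1, Subgroup.one_mem _, Or.inl (by simpa [ev] using hg)⟩
  | cons l L =>
    have he : ev t (l :: L) * g = ev t ((l.1, l.2 * g) :: L) := by
      simp only [ev, letter]; group
    rw [he]
    refine dich_ev T _ _ rfl ?_
    intro m hm
    rcases List.mem_cons.1 hm with rfl | hm
    · exact G.mul_mem (hL l (by simp)) hg
    · exact hL m (by simp [hm])

lemma conj_fix {v w : Perm X} {x : X} (h : w x = x) : (v * w * v⁻¹) (v x) = v x := by
  rw [Perm.mul_apply, Perm.mul_apply, inv_self', h]

lemma conj_one {v w : Perm X} (h : v * w * v⁻¹ = 1) : w = 1 := by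
  rw [mul_inv_eq_one] at h
  simpa using h

lemma lam_G1 (S : Setup G a b u lam) (T : TProp G a b lam t) {w : Perm X} (hw : w ∈ G1 G t) :
    ∀ x, lam (w x) = lam x := by
  induction hw using Subgroup.closure_induction with
  | mem w hw =>
    rcases hw with hw | hw
    · exact S.lamG _ hw
    · rw [Set.mem_singleton_iff] at hw; subst hw; exact T.lab
  | one => simp
  | mul v w _ _ hv hw => intro x; rw [Perm.mul_apply, hv, hw]
  | inv v _ hv =>
    intro x
    have := hv (v⁻¹ x)
    rw [← this]; simp

lemma kprop_G1 (S : Setup G a b u lam) (T : TProp G a b lam t)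
    (full : ∀ σ : Perm (Fin 3), ∃ g ∈ G, ∀ i, g (b i) = b (σ i))
    (hno : ∀ g ∈ G, ¬ ∀ i, g (a i) = b i) : KProp (G1 G t) := by
  refine ⟨?_, ?_, ?_⟩
  · intro w hw x hx h
    obtain ⟨v, hv, h1 | ⟨L, hL, h1⟩⟩ := dich T hw
    · exact conj_one (S.k.k1 _ h1 (fun i => v (x i)) (v.injective.comp hx)
        fun i => conj_fix (h i))
    · refine (hL.absurd3 T full hno 1 one_pos (fun i => v (x i)) (v.injective.comp hx) ?_).elim
      intro i
      rw [pow_one, ← h1, conj_fix (h i)]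
  · intro w hw hw2 x y hxy h h'
    obtain ⟨v, hv, h1 | ⟨L, hL, h1⟩⟩ := dich T hw
    · refine conj_one (S.k.k2 _ h1 ?_ (v x) (v y) (v.injective.ne hxy) (conj_fix h) (conj_fix h'))
      rw [show v * w * v⁻¹ * (v * w * v⁻¹) = v * (w * w) * v⁻¹ by group, hw2]; group
    · refine (hL.absurd3 T full hno 2 two_pos b S.hb ?_).elim
      intro i
      have : ev t L ^ 2 = 1 := by
        rw [← h1, pow_two, show v * w * v⁻¹ * (v * w * v⁻¹) = v * (w * w) * v⁻¹ by group, hw2]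
        group
      rw [this]; rfl
  · intro w hw hw2 x h
    obtain ⟨v, hv, h1 | ⟨L, hL, h1⟩⟩ := dich T hw
    · refine conj_one (S.k.k3 _ h1 ?_ (v x) (conj_fix h))
      rw [show v * w * v⁻¹ * (v * w * v⁻¹) * (v * w * v⁻¹) = v * (w * w * w) * v⁻¹ by group, hw2]
      group
    · refine (hL.absurd3 T full hno 3 three_pos b S.hb ?_).elim
      intro i
      have : ev t L ^ 3 = 1 := by
        rw [← h1, pow_succ, pow_two,
          show v * w * v⁻¹ * (v * w * v⁻¹) * (v * w * v⁻¹) = v * (w * w * w) * v⁻¹ by group, hw2]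
        group
      rw [this]; rfl

lemma reg_G1 (S : Setup G a b u lam) (T : TProp G a b lam t) {w : Perm X} (hw : w ∈ G1 G t)
    {x : X} (hx : lam x ≠ 0) (h : w x = x) : w = 1 := by
  obtain ⟨v, hv, h1 | ⟨L, hL, h1⟩⟩ := dich T hw
  · refine conj_one (S.lamreg (v x) ?_ _ h1 (conj_fix h))
    rwa [lam_G1 S T hv]
  · have h2 := hL.path T 1 one_pos (v x) (by rw [pow_one, ← h1, conj_fix h]) 0
    exfalso
    have hl : lam ((seq L 0).2 (W t (seq L) 0 (v x))) = lam x := by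
      rw [S.lamG _ (hL.mem _ (seq_mem L hL.ne 0))]
      simp [W, lam_G1 S T hv]
    cases he : (seq L 0).1 with
    | true =>
      rw [he] at h2
      obtain ⟨i, h3, -⟩ := h2
      rw [h3, S.lama] at hl
      exact hx hl.symm
    | false =>
      rw [he] at h2
      obtain ⟨i, -, h3⟩ := h2
      rw [h3, S.lamb] at hl
      exact hx hl.symm

/-- The inductive hypothesis. -/
structure Good (b : Fin 3 → X) (G : Subgroup (Perm X)) : Prop where
  k : KProp G
  full : ∀ σ : Perm (Fin 3), ∃ g ∈ G, ∀ i, g (b i) = b (σ i)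
  orb : ∃ u : ℕ → X, ∀ g ∈ G, ∀ i j, g (u i) = u j → i = j ∧ g = 1

lemma avoid1 {u : ℕ → X} (hu : ∀ g ∈ G, ∀ i j, g (u i) = u j → i = j ∧ g = 1) (x : X) :
    ∃ N, ∀ m, N ≤ m → ∀ g ∈ G, g (u m) ≠ x := by
  by_cases h : ∃ m, ∃ g ∈ G, g (u m) = x
  · obtain ⟨m, g, hg, hx⟩ := h
    refine ⟨m + 1, fun m' hm g' hg' hx' => ?_⟩
    have := hu (g⁻¹ * g') (G.mul_mem (G.inv_mem hg) hg') m' m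
      (by rw [Perm.mul_apply, hx', Perm.inv_eq_iff_eq, hx])
    omega
  · push Not at h
    exact ⟨0, fun m _ g hg => h m g hg⟩

lemma exists_setup (H : Good b G) (ha : Injective a) (hb : Injective b) :
    ∃ u lam, Setup G a b u lam := by
  classical
  obtain ⟨u0, hu0⟩ := H.orb
  choose N hN using fun i => avoid1 hu0 (a i)
  choose M hM using fun i => avoid1 hu0 (b i)
  let K := ∑ i, N i + ∑ i, M i
  have hNK : ∀ i, N i ≤ K := fun i => by
    have : N i ≤ ∑ i, N i := Finset.single_le_sum (fun _ _ => Nat.zero_le _) (Finset.mem_univ i)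
    omega
  have hMK : ∀ i, M i ≤ K := fun i => by
    have : M i ≤ ∑ i, M i := Finset.single_le_sum (fun _ _ => Nat.zero_le _) (Finset.mem_univ i)
    omega
  let u : ℕ → ℕ → X := fun l m => u0 (K + Nat.pair l m)
  have hreg : ∀ g ∈ G, ∀ l m l' m', g (u l m) = u l' m' → l = l' ∧ m = m' ∧ g = 1 := by
    intro g hg l m l' m' h
    obtain ⟨h1, h2⟩ := hu0 g hg _ _ h
    have h3 := Nat.pair_eq_pair.1 (Nat.add_left_cancel h1)
    exact ⟨h3.1, h3.2, h2⟩
  let P : X → ℕ → Prop := fun x l => ∃ m, ∃ g ∈ G, g (u l m) = x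
  have hP : ∀ x l l', P x l → P x l' → l = l' := by
    rintro x l l' ⟨m, g, hg, h⟩ ⟨m', g', hg', h'⟩
    refine (hreg (g'⁻¹ * g) (G.mul_mem (G.inv_mem hg') hg) l m l' m' ?_).1
    rw [Perm.mul_apply, h, Perm.inv_eq_iff_eq, h']
  let lam : X → ℕ := fun x => if h : ∃ l, P x l then h.choose else 0
  have hlam : ∀ x l, P x l → lam x = l := by
    intro x l h
    have h' : ∃ l, P x l := ⟨l, h⟩
    simp only [lam, dif_pos h']
    exact hP x _ _ h'.choose_spec h
  have hlam0 : ∀ x, (∀ l, ¬ P x l) → lam x = 0 := by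
    intro x h
    simp only [lam]
    rw [dif_neg]
    push Not
    exact h
  have hPG : ∀ g ∈ G, ∀ x l, P x l → P (g x) l := by
    rintro g hg x l ⟨m, g', hg', rfl⟩
    exact ⟨m, g * g', G.mul_mem hg hg', rfl⟩
  refine ⟨u, lam, H.k, ha, hb, ?_, ?_, hreg, ?_, ?_, ?_⟩
  · intro g hg x
    by_cases h : ∃ l, P x l
    · obtain ⟨l, h⟩ := h
      rw [hlam x l h, hlam _ l (hPG g hg x l h)]
    · push Not at h
      rw [hlam0 x h, hlam0]
      intro l hl
      have := hPG _ (G.inv_mem hg) _ _ hl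
      rw [inv_self'] at this
      exact h l this
  · intro l m
    exact hlam _ _ ⟨m, 1, G.one_mem, rfl⟩
  · intro i
    refine hlam0 _ ?_
    rintro l ⟨m, g, hg, h⟩
    exact hN i _ ((hNK i).trans (Nat.le_add_right _ _)) g hg h
  · intro i
    refine hlam0 _ ?_
    rintro l ⟨m, g, hg, h⟩
    exact hM i _ ((hMK i).trans (Nat.le_add_right _ _)) g hg h
  · intro x hx g hg h
    have : ∃ l, P x l := by
      by_contra h
      push Not at h
      exact hx (hlam0 x h)
    obtain ⟨l, m, g', hg', rfl⟩ := this
    have := (hreg (g'⁻¹ * g * g') (G.mul_mem (G.mul_mem (G.inv_mem hg') hg) hg') l m l m ?_).2.2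
    · have h2 : g = g' * (g'⁻¹ * g * g') * g'⁻¹ := by group
      rw [h2, this]; group
    · rw [Perm.mul_apply, Perm.mul_apply, h, inv_self']

lemma step [Countable X] (H : Good b G) (ha : Injective a) (hb : Injective b)
    (hno : ∀ g ∈ G, ¬ ∀ i, g (a i) = b i) :
    ∃ G', G ≤ G' ∧ Good b G' ∧ ∃ t ∈ G', (∀ i, t (a i) = b i) ∧
      ((∀ c ∈ G, ∀ σ : Perm (Fin 3), (∀ i, c (a i) = a (σ i)) → c = 1) →
        ∀ s ∈ G, s ≠ 1 → (t⁻¹ * s * t * s) ^ 2 ≠ 1) := by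
  obtain ⟨u, lam, S⟩ := exists_setup H ha hb
  obtain ⟨t, T⟩ := exists_t S
  refine ⟨G1 G t, le_G1, ⟨kprop_G1 S T H.full hno, ?_, ?_⟩, t, t_mem, T.base, ?_⟩
  · intro σ
    obtain ⟨g, hg, h⟩ := H.full σ
    exact ⟨g, le_G1 hg, h⟩
  · refine ⟨fun i => u (i + 1) 0, fun g hg i j h => ?_⟩
    have h1 := lam_G1 S T hg (u (i + 1) 0)
    rw [h, S.lamu, S.lamu] at h1
    have h2 : i = j := by omega
    subst h2
    exact ⟨rfl, reg_G1 S T hg (by rw [S.lamu]; omega) h⟩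
  · intro hc s hs hs1 h
    have hCR : CR G a b [(true, s), (false, s)] := by
      refine ⟨by simp, by simp [hs], ?_⟩
      intro k hk
      have hk2 : (seq [(true, s), (false, s)] (k + 1)).2 = s :=  by
        have := seq_mem [(true, s), (false, s)] (by simp) (k + 1)
        simp at this
        rcases this with h | h <;> rw [h]
      rw [hk2] at hk
      rcases hk with ⟨-, -, c, hE⟩ | ⟨-, -, d, hE⟩
      · obtain ⟨h1, h2, σ, h3, h4⟩ := id hE
        have := hc c h1 σ h3
        subst this
        exact hs1 (hE.right_one S.k S.ha S.hb)
      · obtain ⟨h1, h2, σ, h3, h4⟩ := hE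
        exact hs1 (hc s h1 σ h3)
    refine hCR.absurd3 T H.full hno 2 two_pos b hb fun i => ?_
    have : ev t [(true, s), (false, s)] = t⁻¹ * s * t * s := by
      simp [ev, letter, mul_assoc]
    rw [this, h]; rfl

end
end S3T

namespace S3T
open Equiv Function

/-- The starting set. -/
abbrev X0 : Type := Fin 3 ⊕ (Perm (Fin 3) × ℕ)

def rho : Perm (Fin 3) →* Perm X0 where
  toFun σ := Equiv.sumCongr σ (Equiv.prodCongr (Equiv.mulLeft σ) (Equiv.refl ℕ))
  map_one' := by ext x; rcases x with x | ⟨x, n⟩ <;> simp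
  map_mul' σ τ := by ext x; rcases x with x | ⟨x, n⟩ <;> simp [mul_assoc]

lemma rho_inl (σ : Perm (Fin 3)) (i : Fin 3) : rho σ (Sum.inl i) = Sum.inl (σ i) := rfl

lemma rho_inr (σ τ : Perm (Fin 3)) (n : ℕ) : rho σ (Sum.inr (τ, n)) = Sum.inr (σ * τ, n) := rfl

lemma rho_fix {σ : Perm (Fin 3)} {x : X0} (h : rho σ x = x) : σ = 1 ∨ ∃ i, x = Sum.inl i ∧ σ i = i := by
  rcases x with i | ⟨τ, n⟩
  · right
    rw [rho_inl] at h
    exact ⟨i, rfl, Sum.inl_injective h⟩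
  · left
    rw [rho_inr] at h
    have := (Prod.mk.inj (Sum.inr_injective h)).1
    simpa using this

lemma fix2 : ∀ (σ : Perm (Fin 3)) (i j : Fin 3), i ≠ j → σ i = i → σ j = j → σ = 1 := by decide

lemma fix3' : ∀ (σ : Perm (Fin 3)) (i : Fin 3), σ * σ * σ = 1 → σ i = i → σ = 1 := by decide

lemma rho_two {σ : Perm (Fin 3)} {x y : X0} (hxy : x ≠ y) (hx : rho σ x = x) (hy : rho σ y = y) :
    σ = 1 := by
  rcases rho_fix hx with h | ⟨i, rfl, hi⟩
  · exact h
  rcases rho_fix hy with h | ⟨j, rfl, hj⟩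
  · exact h
  exact fix2 σ i j (fun h => hxy (by rw [h])) hi hj

lemma rho_inj {σ : Perm (Fin 3)} (h : rho σ = 1) : σ = 1 := by
  ext i
  have := congrArg (fun f : Perm X0 => f (Sum.inl i)) h
  simp only [rho_inl, Perm.one_apply] at this
  rw [Sum.inl_injective this]; rfl

def b0 : Fin 3 → X0 := Sum.inl

lemma good0 : Good b0 rho.range := by
  refine ⟨⟨?_, ?_, ?_⟩, ?_, ?_⟩
  · rintro _ ⟨σ, rfl⟩ x hx h
    rw [rho_two (hx.ne (show (0 : Fin 3) ≠ 1 by decide)) (h 0) (h 1), map_one]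
  · rintro _ ⟨σ, rfl⟩ - x y hxy hx hy
    rw [rho_two hxy hx hy, map_one]
  · rintro _ ⟨σ, rfl⟩ h x hx
    rw [← map_mul, ← map_mul] at h
    rcases rho_fix hx with h1 | ⟨i, rfl, hi⟩
    · rw [h1, map_one]
    · rw [fix3' σ i (rho_inj h) hi, map_one]
  · intro σ
    exact ⟨rho σ, ⟨σ, rfl⟩, fun i => rfl⟩
  · refine ⟨fun n => Sum.inr (1, n), ?_⟩
    rintro _ ⟨σ, rfl⟩ i j h
    rw [rho_inr] at h
    have h1 := Prod.mk.inj (Sum.inr_injective h)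
    refine ⟨h1.2, ?_⟩
    have : σ = 1 := by simpa using h1.1
    rw [this, map_one]

def a0 : Fin 3 → X0 := ![Sum.inr (1, 0), Sum.inr (1, 1), Sum.inl 2]

lemma a0_inj : Injective a0 := by
  intro i j h
  fin_cases i <;> fin_cases j <;> simp [a0] at h ⊢

lemma exists_start : ∃ G : Subgroup (Perm X0), Good b0 G ∧ ∃ s ∈ G, ∃ s' ∈ G, s * s = 1 ∧
    s' * s' = 1 ∧ s (b0 2) = b0 2 ∧ s' (b0 2) = b0 2 ∧ s * s' ≠ s' * s := by
  have hno : ∀ g ∈ rho.range, ¬ ∀ i, g (a0 i) = b0 i := by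
    rintro _ ⟨σ, rfl⟩ h
    have := h 0
    simp only [a0, Matrix.cons_val_zero, rho_inr, b0] at this
    cases this
  obtain ⟨G, hG, hgood, t, ht, hta, hs⟩ := step good0 a0_inj Sum.inl_injective hno
  have hs0 : rho (swap 0 1) ∈ rho.range := ⟨_, rfl⟩
  have hs1 : rho (swap 0 1) * rho (swap 0 1) = 1 := by rw [← map_mul, swap_mul_self, map_one]
  have hsb : rho (swap 0 1) (b0 2) = b0 2 := by
    show Sum.inl _ = Sum.inl _
    congr 1
  have ht2 : t (b0 2) = b0 2 := hta 2
  refine ⟨G, hgood, rho (swap 0 1), hG hs0, t⁻¹ * rho (swap 0 1) * t, ?_, hs1, ?_, hsb, ?_, ?_⟩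
  · exact G.mul_mem (G.mul_mem (G.inv_mem ht) (hG hs0)) ht
  · rw [show t⁻¹ * rho (swap 0 1) * t * (t⁻¹ * rho (swap 0 1) * t) =
      t⁻¹ * (rho (swap 0 1) * rho (swap 0 1)) * t by group, hs1]
    group
  · rw [Perm.mul_apply, Perm.mul_apply, ht2, hsb, Perm.inv_eq_iff_eq, ht2]
  · intro hcomm
    refine hs ?_ _ hs0 ?_ ?_
    · rintro _ ⟨σ, rfl⟩ τ h
      have h0 := h 0
      have hσ : σ = 1 := by
        generalize τ 0 = j at h0
        fin_cases j <;> simp [a0, rho_inr] at h0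
        exact h0
      rw [hσ, map_one]
    · intro h
      have := congrArg (fun f : Perm (Fin 3) => f 0) (rho_inj h)
      simp at this
    · rw [pow_two]
      calc _ = t⁻¹ * rho (swap 0 1) * t * (rho (swap 0 1) * (t⁻¹ * rho (swap 0 1) * t)) *
            rho (swap 0 1) := by group
        _ = t⁻¹ * (rho (swap 0 1) * rho (swap 0 1)) * t * (rho (swap 0 1) * rho (swap 0 1)) := by
            rw [hcomm]; group
        _ = 1 := by rw [hs1]; group

lemma exists_final : ∃ G : Subgroup (Perm X0), KProp G ∧
    (∀ a : Fin 3 → X0, Injective a → ∃ t ∈ G, ∀ i, t (a i) = b0 i) ∧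
    ∃ s ∈ G, ∃ s' ∈ G, s * s = 1 ∧
    s' * s' = 1 ∧ s (b0 2) = b0 2 ∧ s' (b0 2) = b0 2 ∧ s * s' ≠ s' * s := by
  obtain ⟨G, hG, s, hs, s', hs', h1, h2, h3, h4, h5⟩ := exists_start
  have hne : Nonempty {a : Fin 3 → X0 // Injective a} := ⟨⟨a0, a0_inj⟩⟩
  obtain ⟨x, hx⟩ := exists_surjective_nat {a : Fin 3 → X0 // Injective a}
  have hstep : ∀ (H : {H : Subgroup (Perm X0) // Good b0 H}) (n : ℕ),
      ∃ H' : Subgroup (Perm X0), H.1 ≤ H' ∧ Good b0 H' ∧ ∃ t ∈ H', ∀ i, t ((x n).1 i) = b0 i := by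
    rintro ⟨H, hH⟩ n
    by_cases hno : ∀ g ∈ H, ¬ ∀ i, g ((x n).1 i) = b0 i
    · obtain ⟨H', h1, h2, t, h3, h4, -⟩ := step hH (x n).2 Sum.inl_injective hno
      exact ⟨H', h1, h2, t, h3, h4⟩
    · push Not at hno
      exact ⟨H, le_rfl, hH, hno⟩
  choose f hf1 hf2 hf3 using hstep
  let Gn : ℕ → {H : Subgroup (Perm X0) // Good b0 H} := fun n =>
    Nat.rec ⟨G, hG⟩ (fun n R => ⟨f R n, hf2 R n⟩) n
  have hmono : Monotone (fun n => (Gn n).1) := monotone_nat_of_le_succ fun n => hf1 (Gn n) n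
  have hmem : ∀ g, g ∈ (⨆ n, (Gn n).1) ↔ ∃ n, g ∈ (Gn n).1 := fun g =>
    Subgroup.mem_iSup_of_directed hmono.directed_le
  refine ⟨⨆ n, (Gn n).1, ⟨?_, ?_, ?_⟩, ?_, s, (hmem _).2 ⟨0, hs⟩, s', (hmem _).2 ⟨0, hs'⟩,
    h1, h2, h3, h4, h5⟩
  · intro g hg
    obtain ⟨n, hn⟩ := (hmem g).1 hg
    exact (Gn n).2.k.k1 g hn
  · intro g hg
    obtain ⟨n, hn⟩ := (hmem g).1 hg
    exact (Gn n).2.k.k2 g hn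
  · intro g hg
    obtain ⟨n, hn⟩ := (hmem g).1 hg
    exact (Gn n).2.k.k3 g hn
  · intro a ha
    obtain ⟨n, hn⟩ := hx ⟨a, ha⟩
    obtain ⟨t, ht, h⟩ := hf3 (Gn n) n
    rw [hn] at h
    exact ⟨t, (hmem t).2 ⟨n + 1, ht⟩, h⟩

lemma stab_no_abelian {Γ Y : Type*} [Group Γ] [MulAction Γ Y] [Infinite Y]
    (h3 : SharplyThreeTransitive Γ Y)
    (h2 : ∀ g : Γ, g * g = 1 → ∀ x y : Y, x ≠ y → g • x = x → g • y = y → g = 1)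
    (x0 : Y) (s s' : Γ) (hs : s * s = 1) (hs' : s' * s' = 1) (hx : s • x0 = x0)
    (hx' : s' • x0 = x0) (hne : s * s' ≠ s' * s) (x : Y)
    (N : Subgroup ↥(MulAction.stabilizer Γ x)) (hN : N.Normal)
    (hab : ∀ a b : ↥N, a * b = b * a) : N = ⊥ := by
  have hex : ∀ F : Finset Y, ∃ y, y ∉ F := fun F => Infinite.exists_notMem_finset F
  have fix3 : ∀ (g : Γ) (p q r : Y), p ≠ q → p ≠ r → q ≠ r → g • p = p → g • q = q → g • r = r →
      g = 1 := by
    intro g p q r hpq hpr hqr hp hq hr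
    exact (h3 p q r p q r hpq hpr hqr hpq hpr hqr).unique ⟨hp, hq, hr⟩ (by simp)
  -- 2-transitivity of the stabilizer
  have tr : ∀ p q p' q' : Y, p ≠ q → p' ≠ q' → p ≠ x → q ≠ x → p' ≠ x → q' ≠ x →
      ∃ g : Γ, g • x = x ∧ g • p = p' ∧ g • q = q' := fun p q p' q' h h' hp hq hp' hq' =>
    (h3 x p q x p' q' hp.symm hq.symm h hp'.symm hq'.symm h').exists
  let P : Γ → Prop := fun n => ∃ h : n ∈ MulAction.stabilizer Γ x, (⟨n, h⟩ : MulAction.stabilizer Γ x) ∈ N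
  have Px : ∀ n, P n → n • x = x := fun n hn => hn.1
  have Pmul : ∀ n m, P n → P m → P (n * m) := by
    rintro n m ⟨h1, h2⟩ ⟨h3, h4⟩
    exact ⟨mul_mem h1 h3, N.mul_mem h2 h4⟩
  have Pconj : ∀ g n, g • x = x → P n → P (g * n * g⁻¹) := by
    rintro g n hg ⟨h1, h2⟩
    have hg' : g ∈ MulAction.stabilizer Γ x := hg
    exact ⟨mul_mem (mul_mem hg' h1) (inv_mem hg'), hN.conj_mem _ h2 ⟨g, hg'⟩⟩
  have Pcomm : ∀ n m, P n → P m → n * m = m * n := by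
    rintro n m ⟨h1, h2⟩ ⟨h3, h4⟩
    have := hab ⟨_, h2⟩ ⟨_, h4⟩
    exact congrArg (fun z : N => ((z : MulAction.stabilizer Γ x) : Γ)) this
  by_contra hbot
  obtain ⟨⟨n, hn⟩, hnN, hn1⟩ := (Subgroup.ne_bot_iff_exists_ne_one.1 hbot : ∃ z : N, z ≠ 1) |>.elim
    fun z hz => (⟨z.1, z.2, fun h => hz (Subtype.ext h)⟩ :
      ∃ z : MulAction.stabilizer Γ x, z ∈ N ∧ z ≠ 1)
  have hPn : P n := ⟨hn, hnN⟩
  have hn1' : n ≠ 1 := fun h => hn1 (Subtype.ext h)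
  -- n moves some point
  obtain ⟨y0, hy0⟩ : ∃ y : Y, n • y ≠ y := by
    by_contra hcon
    push Not at hcon
    classical
    obtain ⟨y, hy⟩ := hex {x}
    obtain ⟨z, hz⟩ := hex {x, y}
    simp only [Finset.mem_insert, Finset.mem_singleton, not_or] at hy hz
    exact hn1' (fix3 n x y z (Ne.symm hy) (Ne.symm hz.1) (Ne.symm hz.2) (hcon _) (hcon _) (hcon _))
  have hy0x : y0 ≠ x := fun h => hy0 (by rw [h]; exact hn)
  have hny0x : n • y0 ≠ x := fun h => hy0x (by
    have h4 : n • y0 = n • x := h.trans (Px n hPn).symm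
    exact MulAction.injective n h4)
  -- N is transitive off x
  have Ptr : ∀ p q : Y, p ≠ x → q ≠ x → p ≠ q → ∃ m, P m ∧ m • p = q := by
    intro p q hp hq hpq
    obtain ⟨g, hg, hg1, hg2⟩ := tr y0 (n • y0) p q (Ne.symm hy0) hpq hy0x hny0x hp hq
    refine ⟨g * n * g⁻¹, Pconj g n hg hPn, ?_⟩
    rw [← hg1, ← hg2]
    simp [mul_smul]
  -- elements of N fixing a further point are trivial
  have Pfree : ∀ (m : Γ) (p : Y), P m → p ≠ x → m • p = p → m = 1 := by
    intro m p hm hp hmp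
    have hall : ∀ q : Y, m • q = q := by
      intro q
      by_cases hq : q = x
      · rw [hq]; exact Px m hm
      by_cases hqp : p = q
      · rw [← hqp]; exact hmp
      obtain ⟨k, hk, rfl⟩ := Ptr p q hp hq hqp
      rw [← mul_smul, Pcomm m k hm hk, mul_smul, hmp]
    exact by
      classical
      obtain ⟨y, hy⟩ := hex {x}
      obtain ⟨z, hz⟩ := hex {x, y}
      simp only [Finset.mem_insert, Finset.mem_singleton, not_or] at hy hz
      exact fix3 m x y z (Ne.symm hy) (Ne.symm hz.1) (Ne.symm hz.2) (hall _) (hall _) (hall _)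
  -- involutions fixing x are in N
  have inv_mem : ∀ r : Γ, r * r = 1 → r • x = x → P r := by
    intro r hr hrx
    by_cases hr1 : r = 1
    · rw [hr1]; exact ⟨one_mem _, N.one_mem⟩
    obtain ⟨y, hy⟩ := hex {x}
    simp only [Finset.mem_singleton] at hy
    have hry : r • y ≠ y := fun h => hr1 (h2 r hr x y (Ne.symm hy) hrx h)
    have hryx : r • y ≠ x := fun h => hy (by
      have h4 : r • y = r • x := h.trans hrx.symm
      exact MulAction.injective r h4)
    obtain ⟨m, hm, hmy⟩ := Ptr y (r • y) hy hryx (Ne.symm hry)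
    have hrr : r • r • y = y := by rw [← mul_smul, hr, one_smul]
    have hri : r⁻¹ = r := inv_eq_of_mul_eq_one_left hr
    have h4 : m * (r * m * r⁻¹) = 1 := by
      refine Pfree _ (r • y) (Pmul _ _ hm (Pconj r m hrx hm)) hryx ?_
      rw [hri]
      simp only [mul_smul]
      rw [hrr, hmy, hrr, hmy]
    have h5 : m⁻¹ * r = 1 := by
      have e : r * m * r = m⁻¹ := by
        rw [hri] at h4
        exact (inv_eq_of_mul_eq_one_right h4).symm
      refine h2 _ ?_ x y (Ne.symm hy) ?_ ?_
      · rw [← e]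
        calc r * m * r * r * (r * m * r * r) = r * m * (r * r) * r * m * (r * r) := by group
          _ = r * m * r * m := by rw [hr]; group
          _ = m⁻¹ * m := by rw [e]
          _ = 1 := by group
      · rw [mul_smul, hrx, inv_smul_eq_iff, Px m hm]
      · rw [mul_smul, inv_smul_eq_iff, hmy]
    rw [inv_mul_eq_one] at h5
    rw [← h5]; exact hm
  -- move x0 to x
  obtain ⟨h, hh⟩ : ∃ h : Γ, h • x0 = x := by
    classical
    obtain ⟨y, hy⟩ := hex {x, x0}
    obtain ⟨z, hz⟩ := hex {x, x0, y}
    simp only [Finset.mem_insert, Finset.mem_singleton, not_or] at hy hz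
    obtain ⟨g, hg, -⟩ := (h3 x0 y z x y z (Ne.symm hy.2) (Ne.symm hz.2.1) (Ne.symm hz.2.2)
      (Ne.symm hy.1) (Ne.symm hz.1) (Ne.symm hz.2.2)).exists
    exact ⟨g, hg⟩
  have conjP : ∀ r : Γ, r * r = 1 → r • x0 = x0 → P (h * r * h⁻¹) := by
    intro r hr hrx
    refine inv_mem _ ?_ ?_
    · rw [show h * r * h⁻¹ * (h * r * h⁻¹) = h * (r * r) * h⁻¹ by group, hr]; group
    · rw [← hh]; simp [mul_smul, hrx]
  have := Pcomm _ _ (conjP s hs hx) (conjP s' hs' hx')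
  refine hne ?_
  have e1 : h * (s * s') * h⁻¹ = h * (s' * s) * h⁻¹ := by
    calc _ = h * s * h⁻¹ * (h * s' * h⁻¹) := by group
      _ = h * s' * h⁻¹ * (h * s * h⁻¹) := this
      _ = _ := by group
  simpa using e1

lemma inj3 {Y : Type*} {p q r : Y} (h1 : p ≠ q) (h2 : p ≠ r) (h3 : q ≠ r) :
    Injective ![p, q, r] := by
  intro i j h
  fin_cases i <;> fin_cases j <;> simp_all

end S3T

theorem exists_sharply_three_transitive_no_abelian_normal_in_stabilizers :
    Nonempty SharplyThreeTransitiveNoAbelianWitness := by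
  obtain ⟨G, K, htr, s, hs, s', hs', h1, h2, h3, h4, h5⟩ := S3T.exists_final
  have hsh : SharplyThreeTransitive (ULift G) (ULift S3T.X0) := by
    rintro ⟨x⟩ ⟨y⟩ ⟨z⟩ ⟨x'⟩ ⟨y'⟩ ⟨z'⟩ hxy hxz hyz hxy' hxz' hyz'
    have hd : ∀ {p q : S3T.X0}, ULift.up p ≠ ULift.up q → p ≠ q := fun h h' => h (by rw [h'])
    have i1 := S3T.inj3 (hd hxy) (hd hxz) (hd hyz)
    have i2 := S3T.inj3 (hd hxy') (hd hxz') (hd hyz')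
    obtain ⟨t, ht, e⟩ := htr _ i1
    obtain ⟨t', ht', e'⟩ := htr _ i2
    have key : ∀ i, (t'⁻¹ * t) (![x, y, z] i) = ![x', y', z'] i := by
      intro i
      rw [Equiv.Perm.mul_apply, e, Equiv.Perm.inv_eq_iff_eq, e']
    refine ⟨⟨⟨t'⁻¹ * t, G.mul_mem (G.inv_mem ht') ht⟩⟩, ⟨?_, ?_, ?_⟩, ?_⟩
    · exact congrArg ULift.up (key 0)
    · exact congrArg ULift.up (key 1)
    · exact congrArg ULift.up (key 2)
    · rintro ⟨⟨g, hg⟩⟩ ⟨e1, e2, e3⟩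
      have e1 : g x = x' := congrArg ULift.down e1
      have e2 : g y = y' := congrArg ULift.down e2
      have e3 : g z = z' := congrArg ULift.down e3
      have e4 : (t'⁻¹ * t)⁻¹ * g = 1 := by
        refine K.k1 _ (G.mul_mem (G.inv_mem (G.mul_mem (G.inv_mem ht') ht)) hg) _ i1 fun i => ?_
        rw [Equiv.Perm.mul_apply, Equiv.Perm.inv_eq_iff_eq, key]
        fin_cases i
        · exact e1
        · exact e2
        · exact e3
      rw [inv_mul_eq_one] at e4
      exact congrArg ULift.up (Subtype.ext e4.symm)
  refine ⟨⟨ULift G, ULift S3T.X0, inferInstance, hsh, ?_⟩⟩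
  refine S3T.stab_no_abelian hsh ?_ (ULift.up (S3T.b0 2)) (ULift.up ⟨s, hs⟩) (ULift.up ⟨s', hs'⟩)
    ?_ ?_ ?_ ?_ ?_
  · rintro ⟨⟨g, hg⟩⟩ hgg ⟨x⟩ ⟨y⟩ hxy hx hy
    have := K.k2 g hg (congrArg (fun z : ULift G => (z.down : Equiv.Perm S3T.X0)) hgg) x y
      (fun h => hxy (by rw [h])) (congrArg ULift.down hx) (congrArg ULift.down hy)
    exact congrArg ULift.up (Subtype.ext this)
  · exact congrArg ULift.up (Subtype.ext h1)
  · exact congrArg ULift.up (Subtype.ext h2)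
  · exact congrArg ULift.up h3
  · exact congrArg ULift.up h4
  · intro h
    exact h5 (congrArg (fun z : ULift G => (z.down : Equiv.Perm S3T.X0)) h)
end

section
/- There exist a group H and an infinite set Z with a sharply 2-transitive action of H on Z such that every element of order 2 in H acts on Z without fixed points, and H has no nontrivial abelian normal subgroup. -/
/-- An action is sharply 2-transitive if any pair of distinct points is taken
to any other pair of distinct points by a unique group element. -/
def SharplyTwoTransitive (H Z : Type*) [Group H] [MulAction H Z] : Prop :=
  ∀ y z y' z' : Z, y ≠ z → y' ≠ z' →
    ∃! h : H, h • y = y' ∧ h • z = z'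

/-- A group `H` acting sharply 2-transitively on an infinite set `Z` such that the
involutions of `H` act without fixed points and `H` has no nontrivial abelian normal
subgroup. -/
structure SharplyTwoTransitiveWitness where
  H : Type*
  [grp : Group H]
  Z : Type*
  [act : MulAction H Z]
  infinite : Infinite Z
  sharply2transitive : SharplyTwoTransitive H Z
  involutions_fixed_point_free : ∀ h : H, orderOf h = 2 → ∀ z : Z, h • z ≠ z
  no_abelian_normal : ∀ N : Subgroup H, N.Normal → (∀ a b : ↥N, a * b = b * a) → N = ⊥

namespace RST

/-- The underlying set. -/
abbrev X := ℕ × Bool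

/-- Generator indices; those with second coordinate `true` commute with the involution. -/
abbrev Gen := ℕ × Bool

/-- The fixed point free involution on `X`. -/
def tw (x : X) : X := (x.1, !x.2)

@[simp] theorem tw_tw (x : X) : tw (tw x) = x := by simp [tw]

@[simp] theorem tw_ne (x : X) : tw x ≠ x := by
  obtain ⟨n, b⟩ := x
  cases b <;> simp [tw]

@[simp] theorem tw_inj {x y : X} : tw x = tw y ↔ x = y :=
  ⟨fun h => by simpa using congrArg tw h, fun h => by rw [h]⟩

/-- `Path g τ E γ u v u' v'`: a word of value `γ` carries the pair `(u,v)` to `(u',v')`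
in the partial action described by `E`. -/
inductive Path {Γ : Type} [Group Γ] (g : Gen → Γ) (τ : Γ) (E : Gen → X → X → Prop) :
    Γ → X → X → X → X → Prop
  | refl (u v : X) : Path g τ E 1 u v u v
  | t {γ : Γ} {u v u' v' : X} : Path g τ E γ u v u' v' →
      Path g τ E (τ * γ) u v (tw u') (tw v')
  | fwd {γ : Γ} {u v u' v' u'' v'' : X} {i : Gen} : Path g τ E γ u v u' v' →
      E i u' u'' → E i v' v'' → Path g τ E (g i * γ) u v u'' v''
  | bwd {γ : Γ} {u v u' v' u'' v'' : X} {i : Gen} : Path g τ E γ u v u' v' →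
      E i u'' u' → E i v'' v' → Path g τ E ((g i)⁻¹ * γ) u v u'' v''

variable {Γ : Type} [Group Γ] {g : Gen → Γ} {τ : Γ} {E E' : Gen → X → X → Prop}

namespace Path

theorem cast {γ γ' : Γ} {u v u' v' : X} (h : Path g τ E γ u v u' v') (e : γ = γ') :
    Path g τ E γ' u v u' v' := e ▸ h

theorem trans {γ γ' : Γ} {u v u' v' u'' v'' : X} (h : Path g τ E γ u v u' v')
    (h' : Path g τ E γ' u' v' u'' v'') : Path g τ E (γ' * γ) u v u'' v'' := by
  induction h' with
  | refl => simpa using h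
  | t _ ih => rw [mul_assoc]; exact (ih h).t
  | fwd _ h1 h2 ih => rw [mul_assoc]; exact (ih h).fwd h1 h2
  | bwd _ h1 h2 ih => rw [mul_assoc]; exact (ih h).bwd h1 h2

theorem one_t (u v : X) : Path g τ E τ u v (tw u) (tw v) :=
  (Path.refl u v).t.cast (by simp)

theorem one_t_self (u : X) : Path g τ E τ u (tw u) (tw u) u := by
  simpa using one_t (g := g) (τ := τ) (E := E) u (tw u)

theorem one_fwd {u v u' v' : X} {i : Gen} (h : E i u u') (h' : E i v v') :
    Path g τ E (g i) u v u' v' :=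
  ((Path.refl u v).fwd h h').cast (by simp)

theorem one_bwd {u v u' v' : X} {i : Gen} (h : E i u u') (h' : E i v v') :
    Path g τ E (g i)⁻¹ u' v' u v :=
  ((Path.refl u' v').bwd h h').cast (by simp)

theorem symm (hτ : τ * τ = 1) {γ : Γ} {u v u' v' : X} (h : Path g τ E γ u v u' v') :
    Path g τ E γ⁻¹ u' v' u v := by
  have hτ' : τ⁻¹ = τ := inv_eq_of_mul_eq_one_left hτ
  induction h with
  | refl => simpa using Path.refl _ _
  | @t γ u' v' a b _ ih =>
    have := (one_t (g := g) (τ := τ) (E := E) (tw a) (tw b)).trans (by simpa using ih)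
    exact this.cast (by simp [hτ'])
  | fwd _ h1 h2 ih => exact ((one_bwd h1 h2).trans ih).cast (by simp)
  | bwd _ h1 h2 ih => exact ((one_fwd h1 h2).trans ih).cast (by simp)

theorem swap {γ : Γ} {u v u' v' : X} (h : Path g τ E γ u v u' v') :
    Path g τ E γ v u v' u' := by
  induction h with
  | refl => exact .refl _ _
  | t _ ih => exact ih.t
  | fwd _ h1 h2 ih => exact ih.fwd h2 h1
  | bwd _ h1 h2 ih => exact ih.bwd h2 h1

theorem mono (hE : ∀ i u v, E i u v → E' i u v) {γ : Γ} {u v u' v' : X}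
    (h : Path g τ E γ u v u' v') : Path g τ E' γ u v u' v' := by
  induction h with
  | refl => exact .refl _ _
  | t _ ih => exact ih.t
  | fwd _ h1 h2 ih => exact ih.fwd (hE _ _ _ h1) (hE _ _ _ h2)
  | bwd _ h1 h2 ih => exact ih.bwd (hE _ _ _ h1) (hE _ _ _ h2)

theorem op {γ : Γ} {u v u' v' : X} (h : Path g τ E γ u v u' v') :
    Path (fun i => (g i)⁻¹) τ (fun i a b => E i b a) γ u v u' v' := by
  induction h with
  | refl => exact .refl _ _
  | t _ ih => exact ih.t
  | @fwd _ _ _ _ _ _ _ i _ h1 h2 ih =>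
    exact (ih.bwd (i := i) h1 h2).cast (by simp)
  | @bwd _ _ _ _ _ _ _ i _ h1 h2 ih =>
    exact (ih.fwd (i := i) h1 h2)

end Path

/-- A finite good partial action. -/
structure Good (g : Gen → Γ) (τ : Γ) (E : Gen → X → X → Prop) : Prop where
  fin : {p : Gen × X × X | E p.1 p.2.1 p.2.2}.Finite
  func : ∀ i u v v', E i u v → E i u v' → v = v'
  inj : ∀ i u u' v, E i u v → E i u' v → u = u'
  comm : ∀ i : Gen, i.2 = true → ∀ u v, E i u v → E i (tw u) (tw v)
  fix : ∀ γ u v, u ≠ v → Path g τ E γ u v u v → γ = 1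
  flip : ∀ γ u v, u ≠ v → Path g τ E γ u v v u → ∃ h, γ = h * τ * h⁻¹

theorem Good.op (h : Good g τ E) : Good (fun i => (g i)⁻¹) τ (fun i a b => E i b a) where
  fin := by
    refine Set.Finite.subset (h.fin.image (fun p => (p.1, p.2.2, p.2.1))) ?_
    rintro ⟨i, u, v⟩ hp
    exact ⟨(i, v, u), hp, rfl⟩
  func i u v v' := fun h1 h2 => h.inj i v v' u h1 h2
  inj i u u' v := fun h1 h2 => h.func i v u u' h1 h2
  comm i hi u v := fun h1 => h.comm i hi v u h1
  fix γ u v huv hp := h.fix γ u v huv (by simpa using hp.op)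
  flip γ u v huv hp := h.flip γ u v huv (by simpa using hp.op)

theorem Path.ne (hf : ∀ i u v v', E i u v → E i u v' → v = v')
    (hi : ∀ i u u' v, E i u v → E i u' v → u = u') {γ : Γ} {u v u' v' : X}
    (h : Path g τ E γ u v u' v') (huv : u ≠ v) : u' ≠ v' := by
  induction h with
  | refl => exact huv
  | t _ ih => simpa using ih huv
  | fwd _ h1 h2 ih => rintro rfl; exact ih huv (hi _ _ _ _ h1 h2)
  | bwd _ h1 h2 ih => rintro rfl; exact ih huv (hf _ _ _ _ h1 h2)

/-- The retraction lemma. -/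
theorem retract (hτ : τ * τ = 1) (hE : Good g τ E)
    (hf : ∀ i u v v', E' i u v → E' i u v' → v = v')
    (hi : ∀ i u u' v, E' i u v → E' i u' v → u = u')
    (R : X → X → X → X → Γ → Prop)
    (tot : ∀ u v, u ≠ v → ∃ u0 v0 δ, R u v u0 v0 δ)
    (nd : ∀ u v u0 v0 δ, u ≠ v → R u v u0 v0 δ → u0 ≠ v0)
    (sw : ∀ u v u0 v0 δ, R u v u0 v0 δ → R v u v0 u0 δ)
    (self : ∀ u v u0 v0 δ u1 v1 δ', u ≠ v → R u v u0 v0 δ → R u v u1 v1 δ' →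
      Path g τ E (δ' * δ⁻¹) u0 v0 u1 v1)
    (stt : ∀ u v u0 v0 δ, u ≠ v → R u v u0 v0 δ → ∃ u1 v1 δ', R (tw u) (tw v) u1 v1 δ' ∧
      Path g τ E (δ' * τ * δ⁻¹) u0 v0 u1 v1)
    (stf : ∀ i u v u' v' u0 v0 δ, u ≠ v → E' i u u' → E' i v v' → R u v u0 v0 δ →
      ∃ u1 v1 δ', R u' v' u1 v1 δ' ∧ Path g τ E (δ' * g i * δ⁻¹) u0 v0 u1 v1) :
    (∀ γ u v, u ≠ v → Path g τ E' γ u v u v → γ = 1) ∧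
    (∀ γ u v, u ≠ v → Path g τ E' γ u v v u → ∃ h, γ = h * τ * h⁻¹) := by
  have key : ∀ γ u v u' v', Path g τ E' γ u v u' v' → u ≠ v → ∀ u0 v0 δ u1 v1 δ',
      R u v u0 v0 δ → R u' v' u1 v1 δ' → Path g τ E (δ' * γ * δ⁻¹) u0 v0 u1 v1 := by
    intro γ u v u' v' h
    induction h with
    | refl => 
      intro huv u0 v0 δ u1 v1 δ' h0 h1
      simpa using self _ _ _ _ _ _ _ _ huv h0 h1
    | t hp ih =>
      intro huv u0 v0 δ u1 v1 δ' h0 h1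
      have hne := hp.ne hf hi huv
      obtain ⟨a, b, ε, hab⟩ := tot _ _ hne
      obtain ⟨a', b', ε', hab', hp'⟩ := stt _ _ _ _ _ hne hab
      have h3 := self _ _ _ _ _ _ _ _ (by simpa using hne) hab' h1
      exact (((ih huv _ _ _ _ _ _ h0 hab).trans hp').trans h3).cast (by group)
    | fwd hp e1 e2 ih =>
      intro huv u0 v0 δ u1 v1 δ' h0 h1
      have hne := hp.ne hf hi huv
      have hne' := (hp.fwd e1 e2).ne hf hi huv
      obtain ⟨a, b, ε, hab⟩ := tot _ _ hne
      obtain ⟨a', b', ε', hab', hp'⟩ := stf _ _ _ _ _ _ _ _ hne e1 e2 hab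
      have h3 := self _ _ _ _ _ _ _ _ hne' hab' h1
      exact (((ih huv _ _ _ _ _ _ h0 hab).trans hp').trans h3).cast (by group)
    | bwd hp e1 e2 ih =>
      intro huv u0 v0 δ u1 v1 δ' h0 h1
      have hne := hp.ne hf hi huv
      have hne' := (hp.bwd e1 e2).ne hf hi huv
      obtain ⟨a, b, ε, hab⟩ := tot _ _ hne
      obtain ⟨a', b', ε', hab', hp'⟩ := stf _ _ _ _ _ _ _ _ hne' e1 e2 h1
      have h3 := self _ _ _ _ _ _ _ _ hne hab hab'
      exact (((ih huv _ _ _ _ _ _ h0 hab).trans h3).trans (hp'.symm hτ)).cast (by group)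
  constructor
  · intro γ u v huv hp
    obtain ⟨a, b, ε, hab⟩ := tot _ _ huv
    have := hE.fix _ _ _ (nd _ _ _ _ _ huv hab) (key _ _ _ _ _ hp huv _ _ _ _ _ _ hab hab)
    simpa using this
  · intro γ u v huv hp
    obtain ⟨a, b, ε, hab⟩ := tot _ _ huv
    obtain ⟨h, hh⟩ := hE.flip _ _ _ (nd _ _ _ _ _ huv hab)
      (key _ _ _ _ _ hp huv _ _ _ _ _ _ hab (sw _ _ _ _ _ hab))
    refine ⟨ε⁻¹ * h, ?_⟩
    have : γ = ε⁻¹ * (ε * γ * ε⁻¹) * ε := by group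
    rw [this, hh]
    group

/-- The empty partial action is good. -/
theorem good_empty (hτ : τ * τ = 1) : Good g τ (fun _ _ _ => False) := by
  have key : ∀ γ u v u' v', Path g τ (fun _ _ _ => False) γ u v u' v' →
      (γ = 1 ∧ u' = u ∧ v' = v) ∨ (γ = τ ∧ u' = tw u ∧ v' = tw v) := by
    intro γ u v u' v' h
    induction h with
    | refl => simp
    | t _ ih =>
      rcases ih with ⟨rfl, rfl, rfl⟩ | ⟨rfl, rfl, rfl⟩
      · right; simp
      · left; simp [hτ]
    | fwd _ h1 => exact h1.elim
    | bwd _ h1 => exact h1.elim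
  refine ⟨by simp, by simp, by simp, by simp, ?_, ?_⟩
  · intro γ u v huv h
    rcases key _ _ _ _ _ h with h | h
    · exact h.1
    · exact absurd h.2.1.symm (tw_ne _)
  · intro γ u v huv h
    rcases key _ _ _ _ _ h with h | h
    · exact absurd h.2.2 huv
    · exact ⟨1, by simp [h.1]⟩

/-- Adding a new generator. -/
theorem good_new (hτ : τ * τ = 1) (hE : Good g τ E) (i : Gen) (x y a : X) (hxy : x ≠ y)
    (hg : i.2 = true → g i * τ = τ * g i)
    (hi : ∀ u v, ¬ E i u v) (hno : ∀ γ, ¬ Path g τ E γ x y a (tw a))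
    (hc : (i.2 = true ∧ y = tw x) ∨ (i.2 = false ∧ ∀ γ, ¬ Path g τ E γ x y y x)) :
    Good g τ (fun j u v => E j u v ∨ (j = i ∧ ((u = x ∧ v = a) ∨ (u = y ∧ v = tw a)))) := by
  have hta : tw a ≠ a := tw_ne a
  have hf' : ∀ j u v v', (E j u v ∨ (j = i ∧ ((u = x ∧ v = a) ∨ (u = y ∧ v = tw a)))) →
    (E j u v' ∨ (j = i ∧ ((u = x ∧ v' = a) ∨ (u = y ∧ v' = tw a)))) → v = v' := by
    have := hE.func
    grind
  have hi' : ∀ j u u' v, (E j u v ∨ (j = i ∧ ((u = x ∧ v = a) ∨ (u = y ∧ v = tw a)))) →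
    (E j u' v ∨ (j = i ∧ ((u' = x ∧ v = a) ∨ (u' = y ∧ v = tw a)))) → u = u' := by
    have := hE.inj
    grind
  have hno2 : ∀ γ, ¬ Path g τ E γ y x a (tw a) := fun γ h =>
    hno (τ * γ) (by simpa using h.swap.t)
  have hR := retract (E' := fun j u v => E j u v ∨
      (j = i ∧ ((u = x ∧ v = a) ∨ (u = y ∧ v = tw a)))) hτ hE hf' hi'
    (fun u v u0 v0 δ => (∃ ε, Path g τ E ε x y u v ∧ u0 = a ∧ v0 = tw a ∧ δ = g i * ε⁻¹) ∨
      (∃ ε, Path g τ E ε y x u v ∧ u0 = tw a ∧ v0 = a ∧ δ = g i * ε⁻¹) ∨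
      ((∀ ε, ¬ Path g τ E ε x y u v) ∧ (∀ ε, ¬ Path g τ E ε y x u v) ∧ u0 = u ∧ v0 = v ∧ δ = 1))
  have self : ∀ u v u0 v0 δ u1 v1 δ', u ≠ v → 
     ((∃ ε, Path g τ E ε x y u v ∧ u0 = a ∧ v0 = tw a ∧ δ = g i * ε⁻¹) ∨
      (∃ ε, Path g τ E ε y x u v ∧ u0 = tw a ∧ v0 = a ∧ δ = g i * ε⁻¹) ∨
      ((∀ ε, ¬ Path g τ E ε x y u v) ∧ (∀ ε, ¬ Path g τ E ε y x u v) ∧ u0 = u ∧ v0 = v ∧ δ = 1))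
      → ((∃ ε, Path g τ E ε x y u v ∧ u1 = a ∧ v1 = tw a ∧ δ' = g i * ε⁻¹) ∨
      (∃ ε, Path g τ E ε y x u v ∧ u1 = tw a ∧ v1 = a ∧ δ' = g i * ε⁻¹) ∨
      ((∀ ε, ¬ Path g τ E ε x y u v) ∧ (∀ ε, ¬ Path g τ E ε y x u v) ∧ u1 = u ∧ v1 = v ∧ δ' = 1))
      → Path g τ E (δ' * δ⁻¹) u0 v0 u1 v1 := by
    have uni : ∀ u v ε ε' x y, x ≠ y → Path g τ E ε x y u v → Path g τ E ε' x y u v → ε = ε' := by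
      intro u v ε ε' x y hxy h1 h2
      have := hE.fix _ _ _ hxy (h1.trans (h2.symm hτ))
      exact (inv_mul_eq_one.1 this).symm
    have mix : ∀ u v ε ε', Path g τ E ε x y u v → Path g τ E ε' y x u v →
        ε' * τ = ε ∧ g i * τ = τ * g i := by
      intro u v ε ε' h1 h2
      rcases hc with ⟨hc, rfl⟩ | ⟨hc, hh⟩
      · have h3 : Path g τ E (ε' * τ) x (tw x) u v :=
          (by simpa using Path.one_t (g := g) (τ := τ) (E := E) x (tw x) :
            Path g τ E τ x (tw x) (tw x) x).trans h2
        exact ⟨uni _ _ _ _ _ _ hxy h3 h1, hg hc⟩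
      · exact absurd (h1.trans (h2.symm hτ)) (hh _)
    have hτ' : τ⁻¹ = τ := inv_eq_of_mul_eq_one_left hτ
    intro u v u0 v0 δ u1 v1 δ' huv h0 h1
    rcases h0 with ⟨ε, hp, rfl, rfl, rfl⟩ | ⟨ε, hp, rfl, rfl, rfl⟩ | ⟨n1, n2, rfl, rfl, rfl⟩ <;>
    rcases h1 with ⟨ε', hp', rfl, rfl, rfl⟩ | ⟨ε', hp', rfl, rfl, rfl⟩ | ⟨n1', n2', rfl, rfl, rfl⟩
    · rw [uni _ _ _ _ _ _ hxy hp hp']; simpa using Path.refl _ _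
    · obtain ⟨rfl, h5⟩ := mix _ _ _ _ hp hp'
      exact (Path.one_t_self _).cast (by simp [mul_assoc, hτ']; rw [← mul_assoc, h5]; simp)
    · exact absurd hp (n1' _)
    · obtain ⟨rfl, h5⟩ := mix _ _ _ _ hp' hp
      exact (Path.one_t_self _).swap.cast (by simp [mul_assoc, hτ']; rw [← mul_assoc, h5]; simp)
    · rw [uni _ _ _ _ _ _ hxy.symm hp hp']; simpa using Path.refl _ _
    · exact absurd hp (n2' _)
    · exact absurd hp' (n1 _)
    · exact absurd hp' (n2 _)
    · simpa using Path.refl _ _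
  have hstep : ∀ s u v u' v' u0 v0 δ, Path g τ E s u v u' v' →
     ((∃ ε, Path g τ E ε x y u v ∧ u0 = a ∧ v0 = tw a ∧ δ = g i * ε⁻¹) ∨
      (∃ ε, Path g τ E ε y x u v ∧ u0 = tw a ∧ v0 = a ∧ δ = g i * ε⁻¹) ∨
      ((∀ ε, ¬ Path g τ E ε x y u v) ∧ (∀ ε, ¬ Path g τ E ε y x u v) ∧ u0 = u ∧ v0 = v ∧ δ = 1))
      → ∃ u1 v1 δ', ((∃ ε, Path g τ E ε x y u' v' ∧ u1 = a ∧ v1 = tw a ∧ δ' = g i * ε⁻¹) ∨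
      (∃ ε, Path g τ E ε y x u' v' ∧ u1 = tw a ∧ v1 = a ∧ δ' = g i * ε⁻¹) ∨
      ((∀ ε, ¬ Path g τ E ε x y u' v') ∧ (∀ ε, ¬ Path g τ E ε y x u' v') ∧
        u1 = u' ∧ v1 = v' ∧ δ' = 1)) ∧ Path g τ E (δ' * s * δ⁻¹) u0 v0 u1 v1 := by
    intro s u v u' v' u0 v0 δ hs h0
    rcases h0 with ⟨ε, hp, rfl, rfl, rfl⟩ | ⟨ε, hp, rfl, rfl, rfl⟩ | ⟨n1, n2, rfl, rfl, rfl⟩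
    · exact ⟨_, _, _, Or.inl ⟨_, hp.trans hs, rfl, rfl, rfl⟩, (Path.refl _ _).cast (by group)⟩
    · exact ⟨_, _, _, Or.inr (Or.inl ⟨_, hp.trans hs, rfl, rfl, rfl⟩),
        (Path.refl _ _).cast (by group)⟩
    · exact ⟨_, _, _, Or.inr (Or.inr ⟨fun ε h => n1 _ (h.trans (hs.symm hτ)),
        fun ε h => n2 _ (h.trans (hs.symm hτ)), rfl, rfl, rfl⟩), hs.cast (by group)⟩
  obtain ⟨r1, r2⟩ := hR (by
      intro u v huv
      by_cases h1 : ∃ ε, Path g τ E ε x y u v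
      · obtain ⟨ε, h1⟩ := h1
        exact ⟨_, _, _, Or.inl ⟨ε, h1, rfl, rfl, rfl⟩⟩
      by_cases h2 : ∃ ε, Path g τ E ε y x u v
      · obtain ⟨ε, h2⟩ := h2
        exact ⟨_, _, _, Or.inr (Or.inl ⟨ε, h2, rfl, rfl, rfl⟩)⟩
      push Not at h1 h2
      exact ⟨_, _, _, Or.inr (Or.inr ⟨h1, h2, rfl, rfl, rfl⟩)⟩)
    (by
      rintro u v u0 v0 δ huv (⟨ε, hp, rfl, rfl, rfl⟩ | ⟨ε, hp, rfl, rfl, rfl⟩ |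
        ⟨n1, n2, rfl, rfl, rfl⟩)
      · exact hta.symm
      · exact hta
      · exact huv)
    (by
      rintro u v u0 v0 δ (⟨ε, hp, rfl, rfl, rfl⟩ | ⟨ε, hp, rfl, rfl, rfl⟩ |
        ⟨n1, n2, rfl, rfl, rfl⟩)
      · exact Or.inr (Or.inl ⟨ε, hp.swap, rfl, rfl, rfl⟩)
      · exact Or.inl ⟨ε, hp.swap, rfl, rfl, rfl⟩
      · exact Or.inr (Or.inr ⟨fun ε h => n2 ε h.swap, fun ε h => n1 ε h.swap, rfl, rfl, rfl⟩))
    self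
    (by
      intro u v u0 v0 δ huv h0
      exact hstep τ u v _ _ u0 v0 δ (Path.one_t u v) h0)
    (by
      intro j u v u' v' u0 v0 δ huv h1 h2 h0
      by_cases hj : j = i
      · subst hj
        have h1 := h1.resolve_left (hi _ _)
        have h2 := h2.resolve_left (hi _ _)
        rcases h1 with ⟨-, ⟨rfl, rfl⟩ | ⟨rfl, rfl⟩⟩ <;> rcases h2 with ⟨-, ⟨rfl, rfl⟩ | ⟨rfl, rfl⟩⟩
        · exact absurd rfl huv
        · refine ⟨_, _, _, Or.inr (Or.inr ⟨hno, hno2, rfl, rfl, rfl⟩), ?_⟩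
          have := self _ _ _ _ _ _ _ _ huv h0 (Or.inl ⟨1, .refl _ _, rfl, rfl, rfl⟩)
          simpa using this
        · refine ⟨_, _, _, Or.inr (Or.inr ⟨fun ε h => hno2 ε h.swap, fun ε h => hno ε h.swap,
            rfl, rfl, rfl⟩), ?_⟩
          have := self _ _ _ _ _ _ _ _ huv h0 (Or.inr (Or.inl ⟨1, .refl _ _, rfl, rfl, rfl⟩))
          simpa using this
        · exact absurd rfl huv
      · have h1 := h1.resolve_right (fun h => hj h.1)
        have h2 := h2.resolve_right (fun h => hj h.1)
        exact hstep (g j) u v u' v' u0 v0 δ (Path.one_fwd h1 h2) h0)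
  refine ⟨?_, hf', hi', ?_, r1, r2⟩
  · refine Set.Finite.subset (hE.fin.union (Set.toFinite {(i, x, a), (i, y, tw a)})) ?_
    rintro ⟨j, u, v⟩ (h | ⟨rfl, ⟨rfl, rfl⟩ | ⟨rfl, rfl⟩⟩)
    · exact Or.inl h
    · simp
    · simp
  · intro j hj u v h
    have := hE.comm j hj u v
    have := tw_tw
    grind

/-- Adding a leaf. -/
theorem good_leaf (hτ : τ * τ = 1) (hE : Good g τ E) (i : Gen) (p q : X)
    (hg : i.2 = true → g i * τ = τ * g i)
    (hp : ∀ v, ¬ E i p v) (hpq : p ≠ q) (hpq' : p ≠ tw q)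
    (f1 : ∀ j u, ¬ E j u q) (f2 : ∀ j u, ¬ E j q u)
    (f3 : ∀ j u, ¬ E j u (tw q)) (f4 : ∀ j u, ¬ E j (tw q) u) :
    Good g τ (fun j u v => E j u v ∨
      (j = i ∧ ((u = p ∧ v = q) ∨ (i.2 = true ∧ u = tw p ∧ v = tw q)))) := by
  have hτ' : τ⁻¹ = τ := inv_eq_of_mul_eq_one_left hτ
  have hg' : i.2 = true → (g i)⁻¹ * τ * g i = τ := fun h => by
    rw [mul_assoc, ← hg h]; simp
  set E' : Gen → X → X → Prop := (fun j u v => E j u v ∨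
      (j = i ∧ ((u = p ∧ v = q) ∨ (i.2 = true ∧ u = tw p ∧ v = tw q)))) with hE'
  have tp : i.2 = true → ∀ v, ¬ E i (tw p) v := fun h v hv => by
    have := hE.comm i h _ _ hv
    rw [tw_tw] at this
    exact hp _ this
  have tqq := tw_ne q
  have tpp := tw_ne p
  have eqt : ∀ u v, tw u = v ↔ u = tw v := fun u v => by
    constructor
    · rintro rfl; simp
    · rintro rfl; simp
  have hf' : ∀ j u v v', E' j u v → E' j u v' → v = v' := by
    have := hE.func
    grind
  have hi' : ∀ j u u' v, E' j u v → E' j u' v → u = u' := by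
    have := hE.inj
    grind
  have hc' : ∀ j : Gen, j.2 = true → ∀ u v, E' j u v → E' j (tw u) (tw v) := by
    intro j hj u v h
    have := hE.comm j hj u v
    have := tw_tw
    grind
  have src : ∀ j u v, E' j u v → u ≠ q ∧ u ≠ tw q := by
    intro j u v h
    have := eqt p q
    have := tw_inj (x := p) (y := q)
    grind
  have tq : ∀ j u, E' j u q → j = i ∧ u = p := by grind
  have ttq : ∀ j u, E' j u (tw q) → j = i ∧ i.2 = true ∧ u = tw p := by grind
  have old : ∀ j u v, E' j u v → v ≠ q → v ≠ tw q → E j u v := by grind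
  let Lk : X → X → X → X → Prop := fun u v u0 v0 => E' i u0 u ∧ E' i v0 v ∧ (u = q ∨ v = q)
  have lkab : ∀ u v u0 v0 u1 v1, u ≠ v → Lk u v u0 v0 → Lk (tw u) (tw v) u1 v1 →
      i.2 = true ∧ u1 = tw u0 ∧ v1 = tw v0 := by
    rintro u v u0 v0 u1 v1 huv ⟨h1, h2, h3⟩ ⟨h4, h5, h6⟩
    rw [eqt, eqt] at h6
    rcases h3 with rfl | rfl
    · rcases h6 with h6 | rfl
      · exact absurd h6.symm tqq
      · rw [tw_tw] at h5
        obtain ⟨-, hi2, rfl⟩ := ttq _ _ h2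
        obtain ⟨-, rfl⟩ := tq _ _ h1
        exact ⟨hi2, (ttq _ _ h4).2.2, by rw [tw_tw]; exact (tq _ _ h5).2⟩
    · rcases h6 with rfl | h6
      · rw [tw_tw] at h4
        obtain ⟨-, hi2, rfl⟩ := ttq _ _ h1
        obtain ⟨-, rfl⟩ := tq _ _ h2
        exact ⟨hi2, by rw [tw_tw]; exact (tq _ _ h4).2, (ttq _ _ h5).2.2⟩
      · exact absurd h6.symm tqq
  let R : X → X → X → X → Γ → Prop := fun u v u0 v0 δ =>
    (Lk u v u0 v0 ∧ δ = (g i)⁻¹) ∨ (Lk (tw u) (tw v) u0 v0 ∧ δ = (g i)⁻¹ * τ) ∨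
    ((∀ u0 v0, ¬ Lk u v u0 v0) ∧ (∀ u0 v0, ¬ Lk (tw u) (tw v) u0 v0) ∧ u0 = u ∧ v0 = v ∧ δ = 1)
  obtain ⟨r1, r2⟩ := retract hτ hE hf' hi' R
    (by
      intro u v huv
      by_cases h1 : ∃ u0 v0, Lk u v u0 v0
      · obtain ⟨u0, v0, h1⟩ := h1
        exact ⟨_, _, _, Or.inl ⟨h1, rfl⟩⟩
      by_cases h2 : ∃ u0 v0, Lk (tw u) (tw v) u0 v0
      · obtain ⟨u0, v0, h2⟩ := h2
        exact ⟨_, _, _, Or.inr (Or.inl ⟨h2, rfl⟩)⟩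
      push Not at h1 h2
      exact ⟨_, _, _, Or.inr (Or.inr ⟨h1, h2, rfl, rfl, rfl⟩)⟩)
    (by
      rintro u v u0 v0 δ huv (⟨⟨h1, h2, -⟩, -⟩ | ⟨⟨h1, h2, -⟩, -⟩ | ⟨-, -, rfl, rfl, -⟩)
      · rintro rfl; exact huv (hf' _ _ _ _ h1 h2)
      · rintro rfl; exact huv (tw_inj.1 (hf' _ _ _ _ h1 h2))
      · exact huv)
    (by
      rintro u v u0 v0 δ (⟨⟨h1, h2, h3⟩, rfl⟩ | ⟨⟨h1, h2, h3⟩, rfl⟩ | ⟨n1, n2, rfl, rfl, rfl⟩)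
      · exact Or.inl ⟨⟨h2, h1, h3.symm⟩, rfl⟩
      · exact Or.inr (Or.inl ⟨⟨h2, h1, h3.symm⟩, rfl⟩)
      · exact Or.inr (Or.inr ⟨fun a b h => n1 b a ⟨h.2.1, h.1, h.2.2.symm⟩,
          fun a b h => n2 b a ⟨h.2.1, h.1, h.2.2.symm⟩, rfl, rfl, rfl⟩))
    (by
      rintro u v u0 v0 δ u1 v1 δ' huv
        (⟨k, rfl⟩ | ⟨k, rfl⟩ | ⟨n1, n2, rfl, rfl, rfl⟩)
        (⟨k', rfl⟩ | ⟨k', rfl⟩ | ⟨n1', n2', rfl, rfl, rfl⟩)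
      · rw [hi' _ _ _ _ k.1 k'.1, hi' _ _ _ _ k.2.1 k'.2.1]
        exact (Path.refl _ _).cast (by group)
      · obtain ⟨h1, rfl, rfl⟩ := lkab _ _ _ _ _ _ huv k k'
        exact (Path.one_t _ _).cast (by rw [inv_inv, hg' h1])
      · exact absurd k (n1' _ _)
      · obtain ⟨h1, rfl, rfl⟩ := lkab _ _ _ _ _ _ huv k' k
        have := Path.one_t (g := g) (τ := τ) (E := E) (tw u1) (tw v1)
        rw [tw_tw, tw_tw] at this
        exact this.cast (by rw [mul_inv_rev, inv_inv, hτ', ← mul_assoc, hg' h1])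
      · rw [hi' _ _ _ _ k.1 k'.1, hi' _ _ _ _ k.2.1 k'.2.1]
        exact (Path.refl _ _).cast (by group)
      · exact absurd k (n2' _ _)
      · exact absurd k' (n1 _ _)
      · exact absurd k' (n2 _ _)
      · exact (Path.refl _ _).cast (by group))
    (by
      rintro u v u0 v0 δ huv (⟨k, rfl⟩ | ⟨k, rfl⟩ | ⟨n1, n2, rfl, rfl, rfl⟩)
      · refine ⟨u0, v0, _, Or.inr (Or.inl ⟨by simpa using k, rfl⟩), ?_⟩
        exact (Path.refl _ _).cast (by rw [mul_assoc (g i)⁻¹, hτ]; group)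
      · exact ⟨u0, v0, _, Or.inl ⟨k, rfl⟩, (Path.refl _ _).cast (by group)⟩
      · exact ⟨_, _, _, Or.inr (Or.inr ⟨n2, by simpa using n1, rfl, rfl, rfl⟩),
          (Path.one_t _ _).cast (by group)⟩)
    (by
      intro j u v u' v' u0 v0 δ huv h1 h2 h0
      have s1 := src _ _ _ h1
      have s2 := src _ _ _ h2
      have h0' : u0 = u ∧ v0 = v ∧ δ = 1 := by
        rcases h0 with ⟨k, rfl⟩ | ⟨k, rfl⟩ | ⟨n1, n2, h⟩
        · rcases k.2.2 with h | h
          · exact absurd h s1.1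
          · exact absurd h s2.1
        · rcases k.2.2 with h | h
          · exact absurd ((eqt _ _).1 h) s1.2
          · exact absurd ((eqt _ _).1 h) s2.2
        · exact h
      obtain ⟨rfl, rfl, rfl⟩ := h0'
      by_cases c1 : u' = q ∨ v' = q
      · have : j = i := by
          rcases c1 with rfl | rfl
          · exact (tq _ _ h1).1
          · exact (tq _ _ h2).1
        subst this
        exact ⟨_, _, _, Or.inl ⟨⟨h1, h2, c1⟩, rfl⟩, (Path.refl _ _).cast (by group)⟩
      by_cases c2 : u' = tw q ∨ v' = tw q
      · have : j = i ∧ i.2 = true := by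
          rcases c2 with rfl | rfl
          · exact ⟨(ttq _ _ h1).1, (ttq _ _ h1).2.1⟩
          · exact ⟨(ttq _ _ h2).1, (ttq _ _ h2).2.1⟩
        obtain ⟨rfl, hj⟩ := this
        exact ⟨_, _, _, Or.inr (Or.inl ⟨⟨hc' _ hj _ _ h1, hc' _ hj _ _ h2,
          by rwa [eqt, eqt]⟩, rfl⟩), (Path.one_t _ _).cast (by rw [hg' hj]; group)⟩
      push Not at c1 c2
      refine ⟨_, _, _, Or.inr (Or.inr ⟨?_, ?_, rfl, rfl, rfl⟩),
        (Path.one_fwd (old _ _ _ h1 c1.1 c2.1) (old _ _ _ h2 c1.2 c2.2)).cast (by group)⟩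
      · rintro a b ⟨-, -, h | h⟩
        · exact c1.1 h
        · exact c1.2 h
      · rintro a b ⟨-, -, h | h⟩
        · exact c2.1 ((eqt _ _).1 h)
        · exact c2.2 ((eqt _ _).1 h))
  refine ⟨?_, hf', hi', hc', r1, r2⟩
  refine Set.Finite.subset (hE.fin.union (Set.toFinite {(i, p, q), (i, tw p, tw q)})) ?_
  rintro ⟨j, u, v⟩ (h | ⟨rfl, ⟨rfl, rfl⟩ | ⟨-, rfl, rfl⟩⟩)
  · exact Or.inl h
  · simp
  · simp

/-- Fresh points exist. -/
theorem Good.exists_fresh (hE : Good g τ E) (p : X) : ∃ q, p ≠ q ∧ p ≠ tw q ∧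
    (∀ j u, ¬ E j u q) ∧ (∀ j u, ¬ E j q u) ∧
    (∀ j u, ¬ E j u (tw q)) ∧ (∀ j u, ¬ E j (tw q) u) := by
  have h1 := (hE.fin.image (fun e => e.2.1.1)).union (hE.fin.image (fun e => e.2.2.1))
  obtain ⟨n, hn⟩ := (h1.union (Set.finite_singleton p.1)).exists_notMem
  simp only [Set.mem_union, Set.mem_image, Set.mem_ofPred_eq, Set.mem_singleton_iff, not_or,
    not_exists, not_and] at hn
  obtain ⟨⟨ha, hb⟩, hc⟩ := hn
  refine ⟨(n, false), ?_, ?_, fun j u h => hb (j, u, _) h rfl, fun j u h => ha (j, _, u) h rfl,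
    fun j u h => hb (j, u, _) h rfl, fun j u h => ha (j, _, u) h rfl⟩
  · rintro rfl; exact hc rfl
  · rintro rfl; exact hc rfl

/-- Unused generators exist. -/
theorem Good.exists_gen (hE : Good g τ E) (b : Bool) : ∃ n : ℕ, ∀ u v, ¬ E (n, b) u v := by
  obtain ⟨n, hn⟩ := (hE.fin.image (fun e => e.1.1)).exists_notMem
  simp only [Set.mem_image, Set.mem_ofPred_eq, not_exists, not_and] at hn
  exact ⟨n, fun u v h => hn ((n, b), u, v) h rfl⟩

theorem Good.extend_dom (hτ : τ * τ = 1) (hg : ∀ i : Gen, i.2 = true → g i * τ = τ * g i)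
    (hE : Good g τ E) (i : Gen) (p : X) :
    ∃ E', Good g τ E' ∧ (∀ j u v, E j u v → E' j u v) ∧ ∃ q, E' i p q := by
  by_cases h : ∃ q, E i p q
  · exact ⟨E, hE, fun _ _ _ h => h, h⟩
  push Not at h
  obtain ⟨q, h1, h2, f1, f2, f3, f4⟩ := hE.exists_fresh p
  exact ⟨_, good_leaf hτ hE i p q (hg i) h h1 h2 f1 f2 f3 f4, fun _ _ _ h => Or.inl h,
    q, Or.inr ⟨rfl, Or.inl ⟨rfl, rfl⟩⟩⟩

theorem Good.extend_ran (hτ : τ * τ = 1) (hg : ∀ i : Gen, i.2 = true → g i * τ = τ * g i)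
    (hE : Good g τ E) (i : Gen) (p : X) :
    ∃ E', Good g τ E' ∧ (∀ j u v, E j u v → E' j u v) ∧ ∃ q, E' i q p := by
  have hτ' : τ⁻¹ = τ := inv_eq_of_mul_eq_one_left hτ
  obtain ⟨E', h1, h2, q, h3⟩ := hE.op.extend_dom hτ (fun i hi => by
    have := congrArg (fun x => (x : Γ)⁻¹) (hg i hi)
    simpa [hτ'] using this.symm) i p
  exact ⟨fun i a b => E' i b a, by simpa using h1.op, fun j u v h => h2 j v u h, q, h3⟩

theorem Good.extend_pair (hτ : τ * τ = 1) (hg : ∀ i : Gen, i.2 = true → g i * τ = τ * g i)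
    (hE : Good g τ E) (x y a : X) (hxy : x ≠ y) :
    ∃ E', Good g τ E' ∧ (∀ j u v, E j u v → E' j u v) ∧
      ((∃ γ, Path g τ E' γ x y a (tw a)) ∨ (y ≠ tw x ∧ ∃ γ, Path g τ E' γ x y y x)) := by
  by_cases h1 : ∃ γ, Path g τ E γ x y a (tw a)
  · exact ⟨E, hE, fun _ _ _ h => h, Or.inl h1⟩
  by_cases h2 : y ≠ tw x ∧ ∃ γ, Path g τ E γ x y y x
  · exact ⟨E, hE, fun _ _ _ h => h, Or.inr h2⟩
  push Not at h1
  obtain ⟨n, hn⟩ := hE.exists_gen (decide (y = tw x))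
  refine ⟨_, good_new hτ hE (n, decide (y = tw x)) x y a hxy (hg _) hn h1 ?_,
    fun _ _ _ h => Or.inl h, Or.inl ⟨g (n, decide (y = tw x)), Path.one_fwd ?_ ?_⟩⟩
  · by_cases h3 : y = tw x
    · left; simp [h3]
    · right
      refine ⟨by simp [h3], fun γ h => h2 ⟨h3, γ, h⟩⟩
  · exact Or.inr ⟨rfl, Or.inl ⟨rfl, rfl⟩⟩
  · exact Or.inr ⟨rfl, Or.inr ⟨rfl, rfl⟩⟩

/-- Existence of a generic total partial action. -/
theorem exists_generic (hτ : τ * τ = 1) (hg : ∀ i : Gen, i.2 = true → g i * τ = τ * g i) (a : X) :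
    ∃ S : Set (Gen → X → X → Prop), (∀ E ∈ S, Good g τ E) ∧
      (∀ E ∈ S, ∀ F ∈ S, ∃ D ∈ S, (∀ j u v, E j u v → D j u v) ∧ (∀ j u v, F j u v → D j u v)) ∧
      S.Nonempty ∧
      (∀ i p, ∃ E ∈ S, ∃ q, E i p q) ∧ (∀ i p, ∃ E ∈ S, ∃ q, E i q p) ∧
      (∀ x y, x ≠ y → ∃ E ∈ S,
        ((∃ γ, Path g τ E γ x y a (tw a)) ∨ (y ≠ tw x ∧ ∃ γ, Path g τ E γ x y y x))) := by
  let D : (Gen × X) ⊕ (Gen × X) ⊕ (X × X) → Order.Cofinal {E // Good g τ E} := fun d =>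
    match d with
    | .inl (i, p) => ⟨{E | ∃ q, E.1 i p q}, fun E => by
        obtain ⟨E', h1, h2, h3⟩ := E.2.extend_dom hτ hg i p
        exact ⟨⟨E', h1⟩, h3, h2⟩⟩
    | .inr (.inl (i, p)) => ⟨{E | ∃ q, E.1 i q p}, fun E => by
        obtain ⟨E', h1, h2, h3⟩ := E.2.extend_ran hτ hg i p
        exact ⟨⟨E', h1⟩, h3, h2⟩⟩
    | .inr (.inr (x, y)) => ⟨{E | x ≠ y → ((∃ γ, Path g τ E.1 γ x y a (tw a)) ∨
          (y ≠ tw x ∧ ∃ γ, Path g τ E.1 γ x y y x))}, fun E => by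
        by_cases hxy : x = y
        · exact ⟨E, fun h => absurd hxy h, le_rfl⟩
        obtain ⟨E', h1, h2, h3⟩ := E.2.extend_pair hτ hg x y a hxy
        exact ⟨⟨E', h1⟩, fun _ => h3, h2⟩⟩
  let I := Order.idealOfCofinals (⟨_, good_empty hτ⟩ : {E // Good g τ E}) D
  have hI := Order.cofinal_meets_idealOfCofinals (⟨_, good_empty hτ⟩ : {E // Good g τ E}) D
  refine ⟨{E | ∃ h : Good g τ E, (⟨E, h⟩ : {E // Good g τ E}) ∈ I}, ?_, ?_, ?_, ?_, ?_, ?_⟩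
  · rintro E ⟨h, -⟩
    exact h
  · rintro E ⟨h, hE⟩ F ⟨h', hF⟩
    obtain ⟨K, hK, h1, h2⟩ := I.directed _ hE _ hF
    exact ⟨K.1, ⟨K.2, hK⟩, h1, h2⟩
  · exact ⟨_, good_empty hτ, Order.mem_idealOfCofinals _ _⟩
  · intro i p
    obtain ⟨E, h1, h2⟩ := hI (.inl (i, p))
    exact ⟨E.1, ⟨E.2, h2⟩, h1⟩
  · intro i p
    obtain ⟨E, h1, h2⟩ := hI (.inr (.inl (i, p)))
    exact ⟨E.1, ⟨E.2, h2⟩, h1⟩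
  · intro x y hxy
    obtain ⟨E, h1, h2⟩ := hI (.inr (.inr (x, y)))
    exact ⟨E.1, ⟨E.2, h2⟩, h1 hxy⟩

/-- Relations. -/
def rels : Set (FreeGroup (Option Gen)) :=
  {r | r = FreeGroup.of none * FreeGroup.of none ∨ ∃ i : Gen, i.2 = true ∧
    r = FreeGroup.of (some i) * FreeGroup.of none *
      (FreeGroup.of none * FreeGroup.of (some i))⁻¹}

/-- The group. -/
abbrev Grp := PresentedGroup rels

/-- The involution. -/
def tau : Grp := PresentedGroup.of none

/-- The generators. -/
def gen (i : Gen) : Grp := PresentedGroup.of (some i)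

theorem tau_tau : tau * tau = 1 :=
  PresentedGroup.one_of_mem (rels := rels) (Or.inl rfl)

theorem gen_tau (i : Gen) (hi : i.2 = true) : gen i * tau = tau * gen i := by
  have := PresentedGroup.one_of_mem (rels := rels) (Or.inr ⟨i, hi, rfl⟩)
  rw [map_mul, map_inv] at this
  exact mul_inv_eq_one.1 this

theorem exists_lift {G : Type} [Group G] (t : G) (f : Gen → G) (ht : t * t = 1)
    (hf : ∀ i : Gen, i.2 = true → f i * t = t * f i) :
    ∃ φ : Grp →* G, φ tau = t ∧ ∀ i, φ (gen i) = f i := by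
  have h : ∀ r ∈ rels, FreeGroup.lift (fun o : Option Gen => o.elim t f) r = 1 := by
    rintro r (rfl | ⟨i, hi, rfl⟩)
    · simpa using ht
    · simp only [map_mul, map_inv, FreeGroup.lift_apply_of, Option.elim]
      exact mul_inv_eq_one.2 (hf i hi)
  exact ⟨PresentedGroup.toGroup h, PresentedGroup.toGroup.of h, fun i => PresentedGroup.toGroup.of h⟩

theorem not_comm : tau * (gen (0, false) * tau * (gen (0, false))⁻¹) ≠
    (gen (0, false) * tau * (gen (0, false))⁻¹) * tau := by
  obtain ⟨φ, h1, h2⟩ := exists_lift (G := Equiv.Perm (Fin 3)) (Equiv.swap 0 1)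
    (fun i => if i.2 = true then 1 else Equiv.swap 1 2) (by simp) (by
      intro i hi
      simp [hi])
  intro h
  have := congrArg φ h
  simp only [map_mul, map_inv, h1, h2] at this
  revert this
  decide

theorem main_action : ∃ φ : Grp →* Equiv.Perm X, (∀ x, φ tau x = tw x) ∧
    (∀ γ u v, u ≠ v → φ γ u = u → φ γ v = v → γ = 1) ∧
    (∀ x y, x ≠ y → ∃ γ, φ γ x = ((0, false) : X) ∧ φ γ y = tw (0, false)) := by
  obtain ⟨S, hS, hdir, hne, hdom, hran, hpair⟩ :=
    exists_generic (g := gen) tau_tau gen_tau ((0, false) : X)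
  have hdom' : ∀ i p, ∃ q, ∃ E ∈ S, E i p q := fun i p => by
    obtain ⟨E, h, q, h'⟩ := hdom i p
    exact ⟨q, E, h, h'⟩
  choose f hf using hdom'
  have huniq : ∀ i p q, (∃ E ∈ S, E i p q) → f i p = q := by
    rintro i p q ⟨E, hE, h⟩
    obtain ⟨F, hF, h'⟩ := hf i p
    obtain ⟨D, hD, h1, h2⟩ := hdir E hE F hF
    exact (hS D hD).func i p _ _ (h2 _ _ _ h') (h1 _ _ _ h)
  have hbij : ∀ i, Function.Bijective (f i) := by
    intro i
    constructor
    · intro p p' hpp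
      obtain ⟨E, hE, h⟩ := hf i p
      obtain ⟨F, hF, h'⟩ := hf i p'
      obtain ⟨D, hD, h1, h2⟩ := hdir E hE F hF
      rw [← hpp] at h'
      exact (hS D hD).inj i _ _ _ (h1 _ _ _ h) (h2 _ _ _ h')
    · intro p
      obtain ⟨E, hE, q, h⟩ := hran i p
      exact ⟨q, huniq _ _ _ ⟨E, hE, h⟩⟩
  obtain ⟨φ, φt, φg⟩ := exists_lift (G := Equiv.Perm X) (⟨tw, tw, tw_tw, tw_tw⟩ : Equiv.Perm X)
    (fun i => Equiv.ofBijective (f i) (hbij i)) (by ext1 x; simp) (by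
      intro i hi
      ext1 x
      obtain ⟨E, hE, h⟩ := hf i x
      simpa using huniq _ _ _ ⟨E, hE, (hS E hE).comm i hi _ _ h⟩)
  have φt' : ∀ x, φ tau x = tw x := fun x => by rw [φt]; rfl
  have φg' : ∀ i x, φ (gen i) x = f i x := fun i x => by rw [φg]; rfl
  have hpath : ∀ γ u v, ∃ E ∈ S, Path gen tau E γ u v (φ γ u) (φ γ v) := by
    let K : Subgroup Grp :=
      { carrier := {γ | ∀ u v, ∃ E ∈ S, Path gen tau E γ u v (φ γ u) (φ γ v)}
        one_mem' := fun u v => by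
          obtain ⟨E, hE⟩ := hne
          exact ⟨E, hE, by simpa using Path.refl u v⟩
        mul_mem' := fun {a b} ha hb u v => by
          obtain ⟨E, hE, h1⟩ := hb u v
          obtain ⟨F, hF, h2⟩ := ha (φ b u) (φ b v)
          obtain ⟨D, hD, h3, h4⟩ := hdir E hE F hF
          exact ⟨D, hD, by simpa using (h1.mono h3).trans (h2.mono h4)⟩
        inv_mem' := fun {a} ha u v => by
          obtain ⟨E, hE, h1⟩ := ha ((φ a)⁻¹ u) ((φ a)⁻¹ v)
          exact ⟨E, hE, by simpa using h1.symm tau_tau⟩ }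
    intro γ
    refine PresentedGroup.generated_by rels K ?_ γ
    rintro (_ | i) u v
    · obtain ⟨E, hE⟩ := hne
      refine ⟨E, hE, ?_⟩
      have := Path.one_t (g := gen) (τ := tau) (E := E) u v
      rw [← φt', ← φt'] at this
      exact this
    · obtain ⟨E, hE, h⟩ := hf i u
      obtain ⟨F, hF, h'⟩ := hf i v
      obtain ⟨D, hD, h1, h2⟩ := hdir E hE F hF
      refine ⟨D, hD, ?_⟩
      have := Path.one_fwd (g := gen) (τ := tau) (h1 _ _ _ h) (h2 _ _ _ h')
      rw [← φg', ← φg'] at this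
      exact this
  have hact : ∀ E ∈ S, ∀ γ u v u' v', Path gen tau E γ u v u' v' → φ γ u = u' ∧ φ γ v = v' := by
    intro E hE γ u v u' v' h
    induction h with
    | refl => simp
    | t _ ih => simp [ih, φt']
    | fwd _ h1 h2 ih =>
      simp [ih, φg', huniq _ _ _ ⟨E, hE, h1⟩, huniq _ _ _ ⟨E, hE, h2⟩]
    | bwd _ h1 h2 ih =>
      simp only [map_mul, map_inv, Equiv.Perm.mul_apply, ih, Equiv.Perm.inv_eq_iff_eq, φg']
      exact ⟨(huniq _ _ _ ⟨E, hE, h1⟩).symm, (huniq _ _ _ ⟨E, hE, h2⟩).symm⟩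
  refine ⟨φ, φt', ?_, ?_⟩
  · intro γ u v huv hu hv
    obtain ⟨E, hE, h⟩ := hpath γ u v
    rw [hu, hv] at h
    exact (hS E hE).fix _ _ _ huv h
  · intro x y hxy
    obtain ⟨E, hE, ⟨γ, h⟩ | ⟨-, γ, h⟩⟩ := hpair x y hxy
    · exact ⟨γ, hact E hE _ _ _ _ _ h⟩
    · obtain ⟨k, rfl⟩ := (hS E hE).flip _ _ _ hxy h
      have h1 := (hact E hE _ _ _ _ _ h).1
      have h2 : tw (φ k⁻¹ x) = φ k⁻¹ y := by
        rw [← φt', ← h1]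
        simp
      obtain ⟨F, hF, ⟨γ', h'⟩ | ⟨hn, -⟩⟩ := hpair (φ k⁻¹ x) (tw (φ k⁻¹ x)) (tw_ne _).symm
      · refine ⟨γ' * k⁻¹, ?_⟩
        have := hact F hF _ _ _ _ _ h'
        rw [h2] at this
        simpa using this
      · exact absurd rfl hn

universe u v

theorem final : Nonempty SharplyTwoTransitiveWitness.{u, v} := by
  obtain ⟨φ, φt, hfix, htr⟩ := main_action
  have htr2 : ∀ x y x' y' : X, x ≠ y → x' ≠ y' → ∃ γ, φ γ x = x' ∧ φ γ y = y' := by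
    intro x y x' y' h h'
    obtain ⟨γ, h1, h2⟩ := htr x y h
    obtain ⟨γ', h3, h4⟩ := htr x' y' h'
    refine ⟨γ'⁻¹ * γ, ?_, ?_⟩
    · simp [h1, ← h3]
    · simp [h2, ← h4]
  have heq : ∀ γ γ' u v, u ≠ v → φ γ u = φ γ' u → φ γ v = φ γ' v → γ = γ' := by
    intro γ γ' u v huv h1 h2
    have := hfix (γ'⁻¹ * γ) u v huv (by simp [h1]) (by simp [h2])
    exact (inv_mul_eq_one.1 this).symm
  have hinv : ∀ γ, γ * γ = 1 → ∀ z, φ γ z = z → γ = 1 := by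
    intro γ hγ z hz
    by_contra hne
    obtain ⟨p, hp⟩ : ∃ p, φ γ p ≠ p := by
      by_contra hall
      push Not at hall
      exact hne (hfix γ _ _ (tw_ne (0, false)) (hall _) (hall _))
    have hpp : φ γ (φ γ p) = p := by
      rw [← Equiv.Perm.mul_apply, ← map_mul, hγ]; simp
    obtain ⟨h, h1, h2⟩ := htr p _ hp.symm
    have e : h * γ = tau * h := by
      refine heq _ _ p (φ γ p) hp.symm ?_ ?_
      · simp [h1, h2, φt]
      · simp [h1, h2, φt, hpp]
    have : φ (h * γ) z = φ (tau * h) z := by rw [e]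
    simp [hz, φt] at this
    exact tw_ne _ this.symm
  have hnorm : ∀ N : Subgroup Grp, N.Normal → (∀ a ∈ N, ∀ b ∈ N, a * b = b * a) → N = ⊥ := by
    intro N hN hab
    by_contra hbot
    obtain ⟨n, hn, hn1⟩ := N.ne_bot_iff_exists_ne_one.1 hbot |>.imp (fun n h => h) |> fun ⟨n, h⟩ =>
      (⟨n.1, n.2, fun h' => h (Subtype.ext h')⟩ : ∃ n : Grp, n ∈ N ∧ n ≠ 1)
    obtain ⟨p, hp⟩ : ∃ p, φ n p ≠ p := by
      by_contra hall
      push Not at hall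
      exact hn1 (hfix n _ _ (tw_ne (0, false)) (hall _) (hall _))
    have htrans : ∀ x y, x ≠ y → ∃ m ∈ N, φ m x = y := by
      intro x y hxy
      obtain ⟨h, h1, h2⟩ := htr2 p (φ n p) x y hp.symm hxy
      refine ⟨h * n * h⁻¹, hN.conj_mem n hn h, ?_⟩
      simp [← h1, h2]
    obtain ⟨m, hm, hma⟩ := htrans (0, false) (tw (0, false)) (tw_ne _).symm
    have hcm : (tau * m * tau⁻¹) * m ∈ N := N.mul_mem (hN.conj_mem m hm tau) hm
    have htt : tau⁻¹ = tau := inv_eq_of_mul_eq_one_left tau_tau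
    have hfa : φ ((tau * m * tau⁻¹) * m) (0, false) = (0, false) := by
      rw [htt]
      simp [hma, φt]
    have h1 : (tau * m * tau⁻¹) * m = 1 := by
      refine hfix _ _ _ (tw_ne (0, false)).symm hfa ?_
      rw [← hma, ← Equiv.Perm.mul_apply, ← map_mul, hab _ hcm _ hm, map_mul, Equiv.Perm.mul_apply,
        hfa]
    rw [htt] at h1
    have h2 : tau * m = 1 := by
      refine hinv (tau * m) (by rw [← h1]; group) (0, false) ?_
      simp [hma, φt]
    have h3 : tau ∈ N := by
      rw [eq_inv_of_mul_eq_one_left h2]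
      exact N.inv_mem hm
    exact not_comm (hab _ h3 _ (hN.conj_mem _ h3 _))
  let _ : MulAction (ULift.{u} Grp) (ULift.{v} X) :=
    { smul := fun h z => ⟨φ h.down z.down⟩
      one_smul := fun z => by
        change (⟨φ 1 z.down⟩ : ULift.{v} X) = z
        simp
      mul_smul := fun a b z => by
        change (⟨φ (a.down * b.down) z.down⟩ : ULift.{v} X) = ⟨φ a.down (φ b.down z.down)⟩
        simp }
  have smul_def : ∀ (h : ULift.{u} Grp) (z : ULift.{v} X), h • z = ⟨φ h.down z.down⟩ :=
    fun _ _ => rfl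
  refine ⟨{ H := ULift.{u} Grp, Z := ULift.{v} X, infinite := inferInstance,
            sharply2transitive := ?_, involutions_fixed_point_free := ?_,
            no_abelian_normal := ?_ }⟩
  · rintro ⟨y⟩ ⟨z⟩ ⟨y'⟩ ⟨z'⟩ h h'
    have h : y ≠ z := fun e => h (by rw [e])
    have h' : y' ≠ z' := fun e => h' (by rw [e])
    obtain ⟨γ, h1, h2⟩ := htr2 y z y' z' h h'
    refine ⟨⟨γ⟩, ⟨by simp [smul_def, h1], by simp [smul_def, h2]⟩, ?_⟩
    rintro ⟨γ'⟩ ⟨h3, h4⟩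
    rw [smul_def, ULift.up_inj] at h3 h4
    exact congrArg ULift.up (heq γ' γ y z h (h3.trans h1.symm) (h4.trans h2.symm))
  · rintro ⟨γ⟩ hord ⟨z⟩ hz
    rw [smul_def, ULift.up_inj] at hz
    have h1 : (⟨γ⟩ : ULift.{u} Grp) ^ 2 = 1 := hord ▸ pow_orderOf_eq_one _
    have h2 : γ * γ = 1 := by
      have := congrArg ULift.down h1
      rwa [pow_two] at this
    have h3 := hinv γ h2 z hz
    subst h3
    have : orderOf (1 : ULift.{u} Grp) = 2 := hord
    simp at this
  · intro N hN hab
    have hker := hnorm (N.comap (MulEquiv.ulift.symm : Grp ≃* ULift.{u} Grp).toMonoidHom)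
      (hN.comap _) (fun a ha b hb => by
        have := congrArg (fun x : N => x.1.down) (hab ⟨_, ha⟩ ⟨_, hb⟩)
        exact this)
    rw [Subgroup.eq_bot_iff_forall]
    rintro ⟨x⟩ hx
    have : x ∈ N.comap (MulEquiv.ulift.symm : Grp ≃* ULift.{u} Grp).toMonoidHom := hx
    rw [hker, Subgroup.mem_bot] at this
    rw [this]
    rfl

end RST

theorem exists_sharply_two_transitive_char_two_no_abelian_normal :
    Nonempty SharplyTwoTransitiveWitness := by
  exact RST.final
end

section
/- Let G act on a set X such that the action is 3-sharp. Let a ∈ G have order 3 with a • x ≠ x for all x ∈ X, and let t ∈ G have order 2 fixing exactly one point x₀ ∈ X. Then for every subset S ⊆ X with exactly 3 elements satisfying a • S = S and t • S = S, one has S = {x₀, a • x₀, a² • x₀}. -/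
open Pointwise

/-- An action is 3-sharp if every element fixing three pairwise distinct points is trivial. -/
def ThreeSharp (G X : Type*) [Group G] [MulAction G X] : Prop :=
  ∀ g : G, ∀ x y z : X, x ≠ y → x ≠ z → y ≠ z →
    g • x = x → g • y = y → g • z = z → g = 1

/-- In a 3-sharp action, if `a` has order 3 and acts freely and the involution `t` fixes
exactly the point `x₀`, then the only 3-element subset invariant under both `a` and `t` is
`{x₀, a • x₀, a² • x₀}`. -/
theorem unique_invariant_triple {G X : Type*} [Group G] [MulAction G X]
    (hG : ThreeSharp G X)
    (a : G) (ha : orderOf a = 3) (hafree : ∀ x : X, a • x ≠ x)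
    (t : G) (ht : orderOf t = 2) (x₀ : X) (hfix : ∀ x : X, t • x = x ↔ x = x₀)
    (S : Set X) (hS : S.ncard = 3) (hainv : a • S = S) (htinv : t • S = S) :
    S = {x₀, a • x₀, a ^ 2 • x₀} := by
  have ht2 : ∀ x : X, t • t • x = x := by
    intro x
    have h : t ^ 2 = 1 := ht ▸ pow_orderOf_eq_one t
    rw [← mul_smul, ← pow_two, h, one_smul]
  have ha3 : ∀ x : X, a • a • a • x = x := by
    intro x
    have h : a ^ 3 = 1 := ha ▸ pow_orderOf_eq_one a
    rw [← mul_smul, ← mul_smul, ← pow_three', h, one_smul]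
  have hat : ∀ x ∈ S, a • x ∈ S := fun x hx => hainv ▸ Set.smul_mem_smul_set hx
  have htt : ∀ x ∈ S, t • x ∈ S := fun x hx => htinv ▸ Set.smul_mem_smul_set hx
  have hx0 : x₀ ∈ S := by
    obtain ⟨x, y, z, hxy, hxz, hyz, hS'⟩ := Set.ncard_eq_three.mp hS
    have hx := htt x (by simp [hS'])
    have hy := htt y (by simp [hS'])
    have hz := htt z (by simp [hS'])
    have h1 := ht2 x
    have h2 := ht2 y
    have h3 := ht2 z
    have key : t • x = x ∨ t • y = y ∨ t • z = z := by
      simp only [hS', Set.mem_insert_iff, Set.mem_singleton_iff] at hx hy hz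
      grind
    rcases key with h | h | h <;> rw [← (hfix _).mp h, hS'] <;> simp
  have h01 := hafree x₀
  have h12 := hafree (a • x₀)
  have h02 : a • a • x₀ ≠ x₀ := by
    intro h
    have h' := ha3 x₀
    rw [h] at h'
    exact h01 h'
  rw [pow_two, mul_smul]
  symm
  apply Set.eq_of_subset_of_ncard_le
  · rintro y (rfl | rfl | rfl)
    · exact hx0
    · exact hat _ hx0
    · exact hat _ (hat _ hx0)
  · rw [hS, Set.ncard_eq_three.mpr ⟨_, _, _, h01.symm, h02.symm, h12.symm, rfl⟩]
  · exact Set.finite_of_ncard_ne_zero (by omega)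
end
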